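/- arXiv:1507.07498 — 3 statements merged into one kernel-verified Lean document; each statement's English description precedes it below -/
import Mathlib

section
/- There exists a polynomial f in four variables with rational coefficients and total degree at most 12 such that for every k = (k1,k2,k3,k4) ∈ ℤ^4 with nonnegative entries, the set Σ(k) is finite and |Σ(k)| = f(k1,k2,k3,k4). (This is the Ehrhart-type polynomiality of the counting function used in the proof of Theorem 2 of the paper.) -/
/-- The 70 linear inequalities defining Σ(k). -/
def SatisfiesIneqs (k : Fin 4 → ℤ) (p : Fin 12 → ℤ) : Prop :=
  p 11 ≤ k 0 ∧
  p 10 ≤ k 1 ∧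
  p 8 ≤ k 2 ∧
  p 3 ≤ k 3 ∧
  p 6 + p 10 + p 11 ≤ k 0 + k 1 ∧
  p 6 + p 7 + p 8 + p 9 + p 11 ≤ k 0 + k 1 + k 2 ∧
  p 6 + p 8 + p 9 + p 10 + p 11 ≤ k 0 + k 1 + k 2 ∧
  p 8 + p 9 + p 10 ≤ k 1 + k 2 ∧
  p 3 + p 4 + p 5 + p 6 + p 11 ≤ k 0 + k 1 + k 3 ∧
  p 3 + p 4 + p 6 + p 10 + p 11 ≤ k 0 + k 1 + k 3 ∧
  p 3 + p 4 + p 10 ≤ k 1 + k 3 ∧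
  p 1 + p 3 + p 4 + p 8 + p 9 ≤ k 1 + k 2 + k 3 ∧
  p 3 + p 4 + p 8 + p 9 + p 10 ≤ k 1 + k 2 + k 3 ∧
  p 2 + p 3 + p 4 + p 5 + p 6 + p 8 + p 11 ≤ k 0 + k 1 + k 2 + k 3 ∧
  p 1 + p 2 + p 3 + p 4 + p 6 + p 8 + p 11 ≤ k 0 + k 1 + k 2 + k 3 ∧
  p 1 + p 2 + p 3 + p 6 + p 7 + p 8 + p 11 ≤ k 0 + k 1 + k 2 + k 3 ∧
  p 1 + p 3 + p 6 + p 7 + p 8 + p 9 + p 11 ≤ k 0 + k 1 + k 2 + k 3 ∧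
  p 3 + p 4 + p 6 + p 8 + p 9 + p 10 + p 11 ≤ k 0 + k 1 + k 2 + k 3 ∧
  p 1 + p 3 + p 4 + p 6 + p 8 + p 9 + p 11 ≤ k 0 + k 1 + k 2 + k 3 ∧
  p 0 + p 2 + p 3 + p 4 + p 5 + p 6 + p 7 + p 8 + p 10 ≤ k 0 + 2 * k 1 + k 2 + k 3 ∧
  p 0 + p 1 + p 2 + p 3 + p 4 + p 6 + p 7 + p 8 + p 10 ≤ k 0 + 2 * k 1 + k 2 + k 3 ∧
  p 2 + p 3 + p 4 + p 5 + p 6 + p 7 + p 8 + p 10 + p 11 ≤ k 0 + 2 * k 1 + k 2 + k 3 ∧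
  p 1 + p 2 + p 3 + p 4 + p 6 + p 7 + p 8 + p 10 + p 11 ≤ k 0 + 2 * k 1 + k 2 + k 3 ∧
  p 0 + p 1 + p 3 + p 4 + p 6 + p 7 + p 8 + p 9 + p 10 ≤ k 0 + 2 * k 1 + k 2 + k 3 ∧
  p 1 + p 3 + p 4 + p 6 + p 7 + p 8 + p 9 + p 10 + p 11 ≤ k 0 + 2 * k 1 + k 2 + k 3 ∧
  p 0 + p 3 + p 4 + p 5 + p 6 + p 7 + p 8 + p 9 + p 10 ≤ k 0 + 2 * k 1 + k 2 + k 3 ∧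
  p 3 + p 4 + p 5 + p 6 + p 7 + p 8 + p 9 + p 10 + p 11 ≤ k 0 + 2 * k 1 + k 2 + k 3 ∧
  p 1 + p 2 + p 3 + p 4 + p 6 + p 7 + 2 * p 8 + p 9 + p 10 + p 11 ≤ k 0 + 2 * k 1 + 2 * k 2 + k 3 ∧
  p 2 + p 3 + p 4 + p 5 + p 6 + p 7 + 2 * p 8 + p 9 + p 10 + p 11 ≤ k 0 + 2 * k 1 + 2 * k 2 + k 3 ∧
  p 0 + p 1 + p 2 + p 3 + p 4 + p 6 + p 7 + 2 * p 8 + p 9 + p 10 ≤ k 0 + 2 * k 1 + 2 * k 2 + k 3 ∧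
  p 0 + p 2 + p 3 + p 4 + p 5 + p 6 + p 7 + 2 * p 8 + p 9 + p 10 ≤ k 0 + 2 * k 1 + 2 * k 2 + k 3 ∧
  p 1 + p 3 + p 4 + p 6 + p 7 + 2 * p 8 + 2 * p 9 + p 10 + p 11 ≤ k 0 + 2 * k 1 + 2 * k 2 + k 3 ∧
  p 1 + p 2 + 2 * p 3 + p 4 + p 5 + p 6 + p 7 + p 8 + p 10 + p 11 ≤ k 0 + 2 * k 1 + k 2 + 2 * k 3 ∧
  p 1 + 2 * p 3 + p 4 + p 5 + p 6 + p 7 + p 8 + p 9 + p 10 + p 11 ≤ k 0 + 2 * k 1 + k 2 + 2 * k 3 ∧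
  p 0 + p 1 + p 2 + 2 * p 3 + p 4 + p 5 + p 6 + p 7 + p 8 + p 10 ≤ k 0 + 2 * k 1 + k 2 + 2 * k 3 ∧
  p 0 + p 1 + 2 * p 3 + p 4 + p 5 + p 6 + p 7 + p 8 + p 9 + p 10 ≤ k 0 + 2 * k 1 + k 2 + 2 * k 3 ∧
  p 1 + p 2 + 2 * p 3 + 2 * p 4 + p 5 + p 6 + p 8 + p 10 + p 11 ≤ k 0 + 2 * k 1 + k 2 + 2 * k 3 ∧
  p 1 + 2 * p 3 + 2 * p 4 + p 5 + p 6 + p 8 + p 9 + p 10 + p 11 ≤ k 0 + 2 * k 1 + k 2 + 2 * k 3 ∧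
  p 2 + p 3 + p 4 + p 5 + 2 * p 6 + p 7 + p 8 + p 10 + 2 * p 11 ≤ 2 * k 0 + 2 * k 1 + k 2 + k 3 ∧
  p 3 + p 4 + p 5 + 2 * p 6 + p 7 + p 8 + p 9 + p 10 + 2 * p 11 ≤ 2 * k 0 + 2 * k 1 + k 2 + k 3 ∧
  p 1 + p 2 + p 3 + p 4 + 2 * p 6 + p 7 + p 8 + p 10 + 2 * p 11 ≤ 2 * k 0 + 2 * k 1 + k 2 + k 3 ∧
  p 1 + p 3 + p 4 + 2 * p 6 + p 7 + p 8 + p 9 + p 10 + 2 * p 11 ≤ 2 * k 0 + 2 * k 1 + k 2 + k 3 ∧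
  p 0 + p 1 + p 2 + 2 * p 3 + p 4 + p 5 + p 6 + p 7 + 2 * p 8 + p 9 + p 10 ≤ k 0 + 2 * k 1 + 2 * k 2 + 2 * k 3 ∧
  p 1 + p 2 + 2 * p 3 + p 4 + p 5 + p 6 + p 7 + 2 * p 8 + p 9 + p 10 + p 11 ≤ k 0 + 2 * k 1 + 2 * k 2 + 2 * k 3 ∧
  p 1 + p 2 + 2 * p 3 + 2 * p 4 + p 5 + p 6 + 2 * p 8 + p 9 + p 10 + p 11 ≤ k 0 + 2 * k 1 + 2 * k 2 + 2 * k 3 ∧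
  p 1 + p 2 + 2 * p 3 + p 4 + p 5 + 2 * p 6 + p 7 + p 8 + p 10 + 2 * p 11 ≤ 2 * k 0 + 2 * k 1 + k 2 + 2 * k 3 ∧
  p 1 + 2 * p 3 + p 4 + p 5 + 2 * p 6 + p 7 + p 8 + p 9 + p 10 + 2 * p 11 ≤ 2 * k 0 + 2 * k 1 + k 2 + 2 * k 3 ∧
  p 1 + p 2 + 2 * p 3 + 2 * p 4 + p 5 + 2 * p 6 + p 8 + p 10 + 2 * p 11 ≤ 2 * k 0 + 2 * k 1 + k 2 + 2 * k 3 ∧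
  p 1 + 2 * p 3 + 2 * p 4 + p 5 + 2 * p 6 + p 8 + p 9 + p 10 + 2 * p 11 ≤ 2 * k 0 + 2 * k 1 + k 2 + 2 * k 3 ∧
  p 1 + p 2 + p 3 + p 4 + 2 * p 6 + p 7 + 2 * p 8 + p 9 + p 10 + 2 * p 11 ≤ 2 * k 0 + 2 * k 1 + 2 * k 2 + k 3 ∧
  p 2 + p 3 + p 4 + p 5 + 2 * p 6 + p 7 + 2 * p 8 + p 9 + p 10 + 2 * p 11 ≤ 2 * k 0 + 2 * k 1 + 2 * k 2 + k 3 ∧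
  p 1 + p 3 + p 4 + 2 * p 6 + p 7 + 2 * p 8 + 2 * p 9 + p 10 + 2 * p 11 ≤ 2 * k 0 + 2 * k 1 + 2 * k 2 + k 3 ∧
  p 1 + p 2 + 2 * p 3 + p 4 + p 5 + 2 * p 6 + p 7 + 2 * p 8 + p 9 + p 10 + 2 * p 11 ≤ 2 * k 0 + 2 * k 1 + 2 * k 2 + 2 * k 3 ∧
  p 1 + p 2 + 2 * p 3 + 2 * p 4 + p 5 + 2 * p 6 + 2 * p 8 + p 9 + p 10 + 2 * p 11 ≤ 2 * k 0 + 2 * k 1 + 2 * k 2 + 2 * k 3 ∧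
  p 1 + p 2 + 2 * p 3 + 2 * p 4 + p 5 + p 6 + p 7 + p 8 + 2 * p 10 + p 11 ≤ k 0 + 3 * k 1 + k 2 + 2 * k 3 ∧
  p 1 + 2 * p 3 + 2 * p 4 + p 5 + p 6 + p 7 + p 8 + p 9 + 2 * p 10 + p 11 ≤ k 0 + 3 * k 1 + k 2 + 2 * k 3 ∧
  p 0 + p 1 + p 2 + 2 * p 3 + 2 * p 4 + p 5 + p 6 + p 7 + p 8 + 2 * p 10 ≤ k 0 + 3 * k 1 + k 2 + 2 * k 3 ∧
  p 0 + p 1 + 2 * p 3 + 2 * p 4 + p 5 + p 6 + p 7 + p 8 + p 9 + 2 * p 10 ≤ k 0 + 3 * k 1 + k 2 + 2 * k 3 ∧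
  p 0 + p 1 + 2 * p 3 + 2 * p 4 + p 5 + p 6 + p 7 + 2 * p 8 + 2 * p 9 + 2 * p 10 ≤ k 0 + 3 * k 1 + 2 * k 2 + 2 * k 3 ∧
  p 1 + 2 * p 3 + 2 * p 4 + p 5 + p 6 + p 7 + 2 * p 8 + 2 * p 9 + 2 * p 10 + p 11 ≤ k 0 + 3 * k 1 + 2 * k 2 + 2 * k 3 ∧
  p 0 + p 1 + 2 * p 3 + 2 * p 4 + p 5 + 2 * p 6 + p 7 + p 8 + p 9 + 2 * p 10 + p 11 ≤ 2 * k 0 + 3 * k 1 + k 2 + 2 * k 3 ∧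
  p 0 + p 1 + p 2 + 2 * p 3 + 2 * p 4 + p 5 + 2 * p 6 + p 7 + p 8 + 2 * p 10 + p 11 ≤ 2 * k 0 + 3 * k 1 + k 2 + 2 * k 3 ∧
  p 0 + p 1 + 2 * p 3 + 2 * p 4 + p 5 + 2 * p 6 + p 7 + 2 * p 8 + 2 * p 9 + 2 * p 10 + p 11 ≤ 2 * k 0 + 3 * k 1 + 2 * k 2 + 2 * k 3 ∧
  p 1 + p 2 + 2 * p 3 + 2 * p 4 + p 5 + p 6 + p 7 + 3 * p 8 + 2 * p 9 + 2 * p 10 + p 11 ≤ k 0 + 3 * k 1 + 3 * k 2 + 2 * k 3 ∧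
  p 0 + p 1 + p 2 + 2 * p 3 + 2 * p 4 + p 5 + p 6 + p 7 + 3 * p 8 + 2 * p 9 + 2 * p 10 ≤ k 0 + 3 * k 1 + 3 * k 2 + 2 * k 3 ∧
  p 1 + p 2 + 2 * p 3 + 2 * p 4 + p 5 + 3 * p 6 + p 7 + p 8 + 2 * p 10 + 3 * p 11 ≤ 3 * k 0 + 3 * k 1 + k 2 + 2 * k 3 ∧
  p 1 + 2 * p 3 + 2 * p 4 + p 5 + 3 * p 6 + p 7 + p 8 + p 9 + 2 * p 10 + 3 * p 11 ≤ 3 * k 0 + 3 * k 1 + k 2 + 2 * k 3 ∧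
  p 1 + p 2 + 2 * p 3 + 2 * p 4 + p 5 + 3 * p 6 + p 7 + 3 * p 8 + 2 * p 9 + 2 * p 10 + 3 * p 11 ≤ 3 * k 0 + 3 * k 1 + 3 * k 2 + 2 * k 3 ∧
  p 0 + p 1 + p 2 + 2 * p 3 + 2 * p 4 + p 5 + 2 * p 6 + p 7 + 3 * p 8 + 2 * p 9 + 2 * p 10 + p 11 ≤ 2 * k 0 + 3 * k 1 + 3 * k 2 + 2 * k 3 ∧
  p 1 + 2 * p 3 + 2 * p 4 + p 5 + 3 * p 6 + p 7 + 2 * p 8 + 2 * p 9 + 2 * p 10 + 3 * p 11 ≤ 3 * k 0 + 3 * k 1 + 2 * k 2 + 2 * k 3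

/-- Σ(k): the set of 12-tuples of nonnegative integers satisfying the 70 inequalities. -/
def SigmaSet (k : Fin 4 → ℤ) : Set (Fin 12 → ℤ) :=
  {p | (∀ j, 0 ≤ p j) ∧ SatisfiesIneqs k p}

/-! The points of `Σ(k)` are the integer points over `k` of a rational cone `C ⊆ ℚ⁴ × ℚ¹²`. The
double description method computes generators of `C`, and each of them becomes integral when scaled
to total degree `1` in `k`; its `k`-part is then a unit vector `e_j`.

`C` is a disjoint union of half-open simplicial cones on these generators: `x` is assigned to the
lexicographically minimal support of `t • x + q` for large `t`, where `q` is the sum of the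
generators. An integer point of a half-open simplicial cone is uniquely a point `u` of a finite
half-open box plus a natural combination of the generators, so the number of those over `k` is a
sum over `u` of products of the binomials `(k_j - δ_j + n_j - 1).choose (n_j - 1)`. Here `n_j`
counts the generators with `k`-part `e_j` and `δ` is the `k`-part of `u`. As `q` has positive
degree in direction `j`, the facet opposite to some such generator is kept, which forces
`0 ≤ δ_j < n_j`: precisely the range in which the binomial coefficient is a polynomial in `k_j` for
all `k_j ≥ 0`. -/

section RatioTest

variable {ι K : Type*} [Finite ι] [Field K] [LinearOrder K] [IsStrictOrderedRing K]

theorem exists_nonneg_add_smul_of_neg {x d : ι → K} (hx : 0 ≤ x) (hd : ∃ i, d i < 0) :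
    ∃ t : K, 0 ≤ t ∧ 0 ≤ x + t • d ∧ ∃ i, d i < 0 ∧ (x + t • d) i = 0 := by
  have := Fintype.ofFinite ι
  obtain ⟨i, hi, hmin⟩ := Finset.exists_min_image {i | d i < 0} (fun i => x i / -d i)
    (by simpa [Finset.Nonempty] using hd)
  replace hi : d i < 0 := by simpa using hi
  have ht : 0 ≤ x i / -d i := div_nonneg (hx i) (by linarith)
  refine ⟨x i / -d i, ht, fun j => ?_, i, hi, ?_⟩
  · obtain hj | hj := lt_or_ge (d j) 0
    · have := (le_div_iff₀ (neg_pos.2 hj)).1 (hmin j (by simpa using hj))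
      simp only [Pi.zero_apply, Pi.add_apply, Pi.smul_apply, smul_eq_mul]
      linarith
    · exact add_nonneg (hx j) (mul_nonneg ht hj)
  · have := hi.ne
    simp only [Pi.add_apply, Pi.smul_apply, smul_eq_mul]
    field_simp
    ring

theorem exists_pos_nonneg_add_smul {c d : ι → K} (hc : 0 ≤ c) (hd : ∀ i, c i = 0 → 0 ≤ d i) :
    ∃ t : K, 0 < t ∧ 0 ≤ c + t • d := by
  by_cases hneg : ∃ i, d i < 0
  · obtain ⟨t, ht, hnonneg, i, hi, hzero⟩ := exists_nonneg_add_smul_of_neg hc hneg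
    refine ⟨t, ht.lt_of_ne' fun h0 => ?_, hnonneg⟩
    exact hi.not_ge (hd i (by simpa [h0] using hzero))
  · push Not at hneg
    exact ⟨1, one_pos, by simpa using add_nonneg hc (show 0 ≤ d from hneg)⟩

end RatioTest

section DoubleDescription

open PointedCone

variable {K E : Type*} [Field K] [LinearOrder K] [IsStrictOrderedRing K]
  [AddCommGroup E] [Module K E] {L : Set (Module.Dual K E)} {V : Set E}

theorem mem_hull_of_forall_exists_tight (hL : L.Finite)
    (hsep : ∀ x, (∀ l ∈ L, l x = 0) → x = 0) (hV : V ⊆ dual .id L)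
    (htight : ∀ x ∈ dual .id L, x ≠ 0 → ∃ v ∈ V, v ≠ 0 ∧ ∀ l ∈ L, l x = 0 → l v = 0)
    {x : E} (hx : x ∈ dual .id L) : x ∈ hull K V := by
  classical
  have := hL.fintype
  induction hn : Finset.card {l : L | l.1 x ≠ 0} using Nat.strong_induction_on
    generalizing x with
  | _ n ih =>
    subst hn
    by_cases hx0 : x = 0
    · exact hx0 ▸ zero_mem _
    obtain ⟨v, hvV, hv0, hv⟩ := htight x hx hx0
    have hpos : ∃ l : L, -l.1 v < 0 := by
      by_contra! h
      exact hv0 (hsep v fun l hl => le_antisymm (by simpa using h ⟨l, hl⟩) (hV hvV hl))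
    obtain ⟨t, ht, hnonneg, l, hl, htl⟩ := exists_nonneg_add_smul_of_neg
      (x := fun l : L => l.1 x) (d := fun l => -l.1 v) (fun l => hx l.2) hpos
    have heval : ∀ l : Module.Dual K E, l (x - t • v) = l x + t * -l v := fun l => by
      simp [sub_eq_add_neg]
    have hy : x - t • v ∈ hull K V := by
      refine ih _ (Finset.card_lt_card ?_) (fun l hl => ?_) rfl
      · refine Finset.ssubset_iff_of_subset (fun m hm => ?_) |>.2 ⟨l, ?_, ?_⟩
        · simp only [Finset.mem_filter, Finset.mem_univ, true_and] at hm ⊢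
          exact fun h => hm (by simp [heval, h, hv m.1 m.2 h])
        · simpa using fun h => hl.ne (by simp [hv l.1 l.2 h])
        · simpa [heval] using htl
      · simpa [heval] using hnonneg ⟨l, hl⟩
    simpa using add_mem hy ((hull K V).smul_mem ht (subset_hull hvV))

/-- A double description pair: `V` is a set of nonzero generators of the cone cut out by the linear
forms in `L`. -/
structure IsDDPair (L : Set (Module.Dual K E)) (V : Set E) : Prop where
  zero_notMem : (0 : E) ∉ V
  hull_eq : hull K V = dual .id L

theorem IsDDPair.subset_dual (h : IsDDPair L V) : V ⊆ dual .id L :=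
  h.hull_eq ▸ subset_hull

theorem IsDDPair.exists_tight_of_mem_dual (h : IsDDPair L V) {x : E} (hx : x ∈ dual .id L) :
    ∃ c : E →₀ K, (∀ v ∈ c.support, v ∈ V ∧ 0 < c v ∧ ∀ l ∈ L, l x = 0 → l v = 0) ∧
      c.sum (fun v t => t • v) = x := by
  obtain ⟨c, hcV, hc, hsum⟩ := mem_hull_set.1 (h.hull_eq ▸ hx)
  refine ⟨c, fun v hv => ⟨hcV hv, (hc v).lt_of_ne' (by simpa using hv), fun l hl hlx => ?_⟩, hsum⟩
  have hnonneg : ∀ w ∈ c.support, 0 ≤ c w * l w := fun w hw =>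
    mul_nonneg (hc w) (h.subset_dual (hcV hw) hl)
  have hzero : ∑ w ∈ c.support, c w * l w = 0 := by
    rw [← hlx, ← hsum, Finsupp.sum, map_sum]
    simp
  exact (mul_eq_zero.1 ((Finset.sum_eq_zero_iff_of_nonneg hnonneg).1 hzero v hv)).resolve_left
    (by simpa using hv)

theorem IsDDPair.exists_tight_of_insert (h : IsDDPair L V) {a : Module.Dual K E} {W : Set E}
    (hVW : ∀ v ∈ V, 0 ≤ a v → v ∈ W)
    (hpair : ∀ v ∈ V, ∀ w ∈ V, 0 < a v → a w < 0 → a v • w - a w • v ∈ W ∨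
      ∃ z ∈ V, a z = 0 ∧ ∀ l ∈ L, l v = 0 → l w = 0 → l z = 0)
    {x : E} (hx : x ∈ dual .id (insert a L)) (hx0 : x ≠ 0) :
    ∃ v ∈ W, ∀ l ∈ insert a L, l x = 0 → l v = 0 := by
  obtain ⟨c, hc, hsum⟩ := h.exists_tight_of_mem_dual (dual_anti (Set.subset_insert a L) hx)
  have hax : a x = ∑ v ∈ c.support, c v * a v := by
    rw [← hsum, Finsupp.sum, map_sum]
    simp
  obtain hpos | hzero := (show 0 ≤ a x from hx (Set.mem_insert a L)).lt_or_eq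
  · obtain ⟨v, hv, hav⟩ := Finset.exists_lt_of_sum_lt (s := c.support) (f := fun _ => 0)
      (g := fun v => c v * a v) (by simpa [← hax] using hpos)
    obtain ⟨hvV, hcv, htight⟩ := hc v hv
    exact ⟨v, hVW v hvV (pos_of_mul_pos_right hav hcv.le).le, by simpa [hpos.ne'] using htight⟩
  by_cases hexists : ∃ v ∈ c.support, a v = 0
  · obtain ⟨v, hv, hav⟩ := hexists
    exact ⟨v, hVW v (hc v hv).1 hav.ge, by simpa [hav] using (hc v hv).2.2⟩
  push Not at hexists
  have hne : ∃ v ∈ c.support, c v * a v ≠ 0 := by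
    obtain ⟨v, hv⟩ : c.support.Nonempty := Finsupp.support_nonempty_iff.2 fun h0 => hx0 <| by
      rw [← hsum, h0, Finsupp.sum_zero_index]
    exact ⟨v, hv, mul_ne_zero (hc v hv).2.1.ne' (hexists v hv)⟩
  obtain ⟨v, hv, hav⟩ := Finset.exists_pos_of_sum_zero_of_exists_nonzero _ (hax ▸ hzero.symm) hne
  obtain ⟨w, hw, haw⟩ := Finset.exists_pos_of_sum_zero_of_exists_nonzero (s := c.support)
    (fun w => -(c w * a w)) (by rw [Finset.sum_neg_distrib, ← hax, ← hzero, neg_zero])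
    (by simpa only [ne_eq, neg_eq_zero] using hne)
  obtain ⟨hvV, hcv, hvx⟩ := hc v hv
  obtain ⟨hwV, hcw, hwx⟩ := hc w hw
  obtain hmem | ⟨z, hzV, haz, hz⟩ := hpair v hvV w hwV (pos_of_mul_pos_right hav hcv.le)
    (neg_of_mul_neg_right (neg_pos.1 haw) hcw.le)
  · refine ⟨_, hmem, Set.forall_mem_insert.2 ⟨fun _ => by simp [mul_comm], fun l hl hlx => ?_⟩⟩
    simp [hvx l hl hlx, hwx l hl hlx]
  · exact ⟨z, hVW z hzV haz.ge, Set.forall_mem_insert.2 ⟨fun _ => haz, fun l hl hlx =>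
      hz l hl (hvx l hl hlx) (hwx l hl hlx)⟩⟩

theorem isDDPair_insert (h : IsDDPair L V) (hL : L.Finite)
    (hsep : ∀ x, (∀ l ∈ L, l x = 0) → x = 0) (a : Module.Dual K E) {W : Set E}
    (hVW : ∀ v ∈ V, 0 ≤ a v → v ∈ W)
    (hWV : ∀ u ∈ W, (u ∈ V ∧ 0 ≤ a u) ∨
      ∃ v ∈ V, ∃ w ∈ V, 0 < a v ∧ a w < 0 ∧ u = a v • w - a w • v)
    (hpair : ∀ v ∈ V, ∀ w ∈ V, 0 < a v → a w < 0 → a v • w - a w • v ∈ W ∨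
      ∃ z ∈ V, a z = 0 ∧ ∀ l ∈ L, l v = 0 → l w = 0 → l z = 0) :
    IsDDPair (insert a L) W := by
  have hW : W ⊆ dual .id (insert a L) := by
    refine fun u hu => Set.forall_mem_insert.2 ?_
    obtain ⟨huV, hau⟩ | ⟨v, hv, w, hw, hav, haw, rfl⟩ := hWV u hu
    · exact ⟨hau, h.subset_dual huV⟩
    · refine ⟨by simp [mul_comm], fun l hl => ?_⟩
      have hlv : 0 ≤ l v := h.subset_dual hv hl
      have hlw : 0 ≤ l w := h.subset_dual hw hl
      have := add_nonneg (mul_nonneg hav.le hlw) (mul_nonneg (neg_pos.2 haw).le hlv)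
      simpa [sub_eq_add_neg] using this
  have hW0 : 0 ∉ W := by
    intro h0
    obtain ⟨huV, -⟩ | ⟨v, hv, w, hw, hav, haw, h0⟩ := hWV 0 h0
    · exact h.zero_notMem huV
    · refine h.zero_notMem (hsep v (fun l hl => ?_) ▸ hv)
      have hlv : 0 ≤ l v := h.subset_dual hv hl
      have hlw : 0 ≤ l w := h.subset_dual hw hl
      have : 0 = a v * l w - a w * l v := by simpa using congrArg l h0
      nlinarith [mul_nonneg hav.le hlw]
  refine ⟨hW0, le_antisymm (Submodule.span_le.2 hW) fun x hx => ?_⟩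
  refine mem_hull_of_forall_exists_tight (hL.insert a) (fun x hx => hsep x fun l hl =>
    hx l (Set.mem_insert_of_mem a hl)) hW (fun x hx hx0 => ?_) hx
  obtain ⟨v, hvW, hv⟩ := h.exists_tight_of_insert hVW hpair hx hx0
  exact ⟨v, hvW, fun h0 => hW0 (h0 ▸ hvW), hv⟩

end DoubleDescription

section ListDoubleDescription

open PointedCone

/-- The dot product of two integer vectors given as lists. -/
def rowDot (a r : List ℤ) : ℤ := (List.zipWith (· * ·) a r).sum

/-- The set of rows of `L` orthogonal to `r`, encoded as a bit mask whose lowest bit belongs to the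
head of `L`. -/
def tightMask : List (List ℤ) → List ℤ → ℕ
  | [], _ => 0
  | a :: L, r => Nat.bit (rowDot a r = 0) (tightMask L r)

/-- An integer vector together with its `tightMask` for the constraints treated so far. -/
structure MaskedRay where
  row : List ℤ
  mask : ℕ

/-- The positive combination of `r` and `s` on which `a` vanishes, when `a` is positive on `r` and
negative on `s`. -/
def combineRays (a : List ℤ) (r s : MaskedRay) : MaskedRay where
  row := List.zipWith (fun x y => rowDot a r.row * y - rowDot a s.row * x) r.row s.row
  mask := Nat.bit true (r.mask &&& s.mask)

/-- One step of the double description method: from generators of a cone to generators of its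
intersection with `{x | 0 ≤ a ⬝ x}`. A pair of rays is combined only if it is adjacent, i.e. no
third ray on the hyperplane is tight wherever both members of the pair are. -/
def ddStep (a : List ℤ) (R : List MaskedRay) : List MaskedRay :=
  let pos := R.filter (0 < rowDot a ·.row)
  let neg := R.filter (rowDot a ·.row < 0)
  let zero := R.filter (rowDot a ·.row = 0)
  (R.filter (0 ≤ rowDot a ·.row)).map
      (fun r => ⟨r.row, Nat.bit (rowDot a r.row = 0) r.mask⟩) ++
    pos.flatMap fun r =>
      (neg.filter fun s => ∀ z ∈ zero, r.mask &&& s.mask &&& z.mask ≠ r.mask &&& s.mask).map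
        (combineRays a r)

/-- The rows of the `d × d` identity matrix. -/
def unitRows (d : ℕ) : List (List ℤ) :=
  List.ofFn fun i : Fin d => List.ofFn (Pi.single i 1)

/-- Generators of `{x ∈ ℚ^d | 0 ≤ x, ∀ a ∈ A, 0 ≤ a ⬝ x}`, by the double description method
started from the nonnegative orthant. -/
def doubleDescription (d : ℕ) (A : List (List ℤ)) : List MaskedRay :=
  A.foldr ddStep ((unitRows d).map fun r => ⟨r, tightMask (unitRows d) r⟩)

variable {d : ℕ} {L : List (List ℤ)} {R : List MaskedRay} {a r s : List ℤ}

theorem bit_eq_bit_iff {b c : Bool} {m n : ℕ} : Nat.bit b m = Nat.bit c n ↔ b = c ∧ m = n := by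
  cases b <;> cases c <;> simp <;> omega

theorem tightMask_land_land (z : List ℤ) :
    tightMask L r &&& tightMask L s &&& tightMask L z = tightMask L r &&& tightMask L s ↔
      ∀ a ∈ L, rowDot a r = 0 → rowDot a s = 0 → rowDot a z = 0 := by
  induction L with
  | nil => simp [tightMask]
  | cons a L ih =>
    simp only [tightMask, Nat.land_bit, bit_eq_bit_iff, ih, List.forall_mem_cons]
    simp

theorem tightMask_eq_land {u : List ℤ}
    (h : ∀ a ∈ L, rowDot a u = 0 ↔ rowDot a r = 0 ∧ rowDot a s = 0) :
    tightMask L u = tightMask L r &&& tightMask L s := by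
  induction L with
  | nil => simp [tightMask]
  | cons a L ih =>
    rw [List.forall_mem_cons] at h
    simp [tightMask, Nat.land_bit, h.1, ih h.2]

theorem mem_ddStep {a : List ℤ} {t : MaskedRay} :
    t ∈ ddStep a R ↔
      (∃ r ∈ R, 0 ≤ rowDot a r.row ∧ ⟨r.row, Nat.bit (rowDot a r.row = 0) r.mask⟩ = t) ∨
      ∃ r ∈ R, 0 < rowDot a r.row ∧ ∃ s ∈ R,
        (∀ z ∈ R, rowDot a z.row = 0 →
          r.mask &&& s.mask &&& z.mask ≠ r.mask &&& s.mask) ∧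
        rowDot a s.row < 0 ∧ combineRays a r s = t := by
  simp [ddStep, and_assoc]

variable (d) in
/-- The vector of `ℚ^d` with the entries of `r`. -/
def rowVec (r : List ℤ) : Fin d → ℚ := fun i => (r.getD i 0 : ℤ)

variable (d) in
/-- The linear form on `ℚ^d` with the entries of `a` as coefficients. -/
def rowForm (a : List ℤ) : Module.Dual ℚ (Fin d → ℚ) :=
  ∑ i, rowVec d a i • LinearMap.proj i

theorem rowForm_rowVec (hr : r.length = d) : rowForm d a (rowVec d r) = rowDot a r := by
  have hsum : ∑ i : Fin d, a.getD i 0 * r.getD i 0 = rowDot a r := by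
    induction d generalizing a r with
    | zero => simp [List.length_eq_zero_iff.1 hr, rowDot]
    | succ d ih =>
      obtain ⟨x, r, rfl⟩ := List.exists_cons_of_length_eq_add_one hr
      cases a with
      | nil => simp [rowDot]
      | cons b a => simpa [Fin.sum_univ_succ, rowDot] using ih (by simpa using hr)
  simp [rowForm, rowVec, ← hsum]

theorem rowVec_zipWith (hr : r.length = d) (hs : s.length = d) (p q : ℤ) :
    rowVec d (List.zipWith (fun x y => p * y - q * x) r s) =
      (p : ℚ) • rowVec d s - (q : ℚ) • rowVec d r := by
  ext i
  simp [rowVec, hr, hs]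

theorem length_of_mem_unitRows (h : r ∈ unitRows d) : r.length = d := by
  obtain ⟨i, rfl⟩ := (List.mem_ofFn' _ _).1 h
  simp

theorem rowVec_ofFn (f : Fin d → ℤ) : rowVec d (List.ofFn f) = fun i => (f i : ℚ) := by
  ext i
  simp [rowVec]

theorem rowDot_combineRays {r s : MaskedRay} (hr : r.row.length = d) (hs : s.row.length = d)
    (b : List ℤ) : rowDot b (combineRays a r s).row =
      rowDot a r.row * rowDot b s.row - rowDot a s.row * rowDot b r.row := by
  have hlen : (combineRays a r s).row.length = d := by simp [combineRays, hr, hs]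
  have h := rowForm_rowVec (a := b) hlen
  rw [combineRays, rowVec_zipWith hr hs, map_sub, map_smul, map_smul, rowForm_rowVec hr,
    rowForm_rowVec hs, smul_eq_mul, smul_eq_mul] at h
  exact_mod_cast h.symm

/-- The invariant of the double description method: the rays in `R` generate the cone
`{x | ∀ a ∈ L, 0 ≤ a ⬝ x}` in `ℚ^d`, and the forms in `L` separate points. -/
structure IsDDState (d : ℕ) (L : List (List ℤ)) (R : List MaskedRay) : Prop where
  length_eq : ∀ r ∈ R, r.row.length = d
  mask_eq : ∀ r ∈ R, r.mask = tightMask L r.row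
  separating : ∀ x, (∀ a ∈ L, rowForm d a x = 0) → x = 0
  isDDPair : IsDDPair (rowForm d '' {a | a ∈ L}) ((fun r => rowVec d r.row) '' {r | r ∈ R})

theorem IsDDState.rowDot_nonneg (h : IsDDState d L R) {r : MaskedRay} (hr : r ∈ R) (ha : a ∈ L) :
    0 ≤ rowDot a r.row := by
  have : 0 ≤ rowForm d a (rowVec d r.row) := h.isDDPair.subset_dual ⟨r, hr, rfl⟩ ⟨a, ha, rfl⟩
  rwa [rowForm_rowVec (h.length_eq r hr), Int.cast_nonneg_iff] at this

theorem IsDDState.mask_combineRays (h : IsDDState d L R) {r s : MaskedRay} (hr : r ∈ R)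
    (hs : s ∈ R) (har : 0 < rowDot a r.row) (has : rowDot a s.row < 0) :
    (combineRays a r s).mask = tightMask (a :: L) (combineRays a r s).row := by
  have hdot := rowDot_combineRays (a := a) (h.length_eq r hr) (h.length_eq s hs)
  have htight : ∀ b ∈ L, rowDot b (combineRays a r s).row = 0 ↔
      rowDot b r.row = 0 ∧ rowDot b s.row = 0 := fun b hb => by
    have hbr := h.rowDot_nonneg hr hb
    have hbs := h.rowDot_nonneg hs hb
    rw [hdot, sub_eq_add_neg, ← neg_mul, add_eq_zero_iff_of_nonneg (by positivity)
      (mul_nonneg (neg_pos.2 has).le hbr)]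
    simp [har.ne', has.ne, and_comm]
  have hzero : rowDot a (combineRays a r s).row = 0 := by rw [hdot]; ring
  rw [tightMask, tightMask_eq_land htight, ← h.mask_eq r hr, ← h.mask_eq s hs]
  simp only [hzero, decide_true]
  rfl

theorem IsDDState.isDDPair_ddStep (h : IsDDState d L R) (a : List ℤ) :
    IsDDPair (rowForm d '' {b | b ∈ a :: L})
      ((fun r => rowVec d r.row) '' {r | r ∈ ddStep a R}) := by
  have hform : ∀ r ∈ R, ∀ b, rowForm d b (rowVec d r.row) = rowDot b r.row := fun r hr b =>
    rowForm_rowVec (h.length_eq r hr)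
  have hcomb : ∀ r ∈ R, ∀ s ∈ R, rowVec d (combineRays a r s).row =
      (rowDot a r.row : ℚ) • rowVec d s.row - (rowDot a s.row : ℚ) • rowVec d r.row :=
    fun r hr s hs => rowVec_zipWith (h.length_eq r hr) (h.length_eq s hs) _ _
  rw [show {b | b ∈ a :: L} = insert a {b | b ∈ L} by ext; simp, Set.image_insert_eq]
  refine isDDPair_insert h.isDDPair (L.finite_toSet.image _) (by simpa using h.separating) _
    ?_ ?_ ?_
  · rintro _ ⟨r, hr, rfl⟩ har
    rw [hform r hr, Int.cast_nonneg_iff] at har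
    exact ⟨_, mem_ddStep.2 (.inl ⟨r, hr, har, rfl⟩), rfl⟩
  · rintro _ ⟨t, ht, rfl⟩
    obtain ⟨r, hr, har, rfl⟩ | ⟨r, hr, har, s, hs, -, has, rfl⟩ := mem_ddStep.1 ht
    · exact .inl ⟨⟨r, hr, rfl⟩, by simpa [hform r hr] using har⟩
    · refine .inr ⟨_, ⟨r, hr, rfl⟩, _, ⟨s, hs, rfl⟩, ?_⟩
      simpa [hform r hr, hform s hs, hcomb r hr s hs] using ⟨har, has⟩
  · rintro _ ⟨r, hr, rfl⟩ _ ⟨s, hs, rfl⟩ har has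
    simp only [hform r hr, hform s hs, Int.cast_pos, Int.cast_lt_zero] at har has ⊢
    by_cases hadj : ∃ z ∈ R, rowDot a z.row = 0 ∧
        r.mask &&& s.mask &&& z.mask = r.mask &&& s.mask
    · obtain ⟨z, hz, haz, hmask⟩ := hadj
      rw [h.mask_eq r hr, h.mask_eq s hs, h.mask_eq z hz, tightMask_land_land] at hmask
      exact .inr ⟨_, ⟨z, hz, rfl⟩, by simpa [hform z hz] using haz,
        by simpa [hform z hz, hform r hr, hform s hs] using hmask⟩
    · push Not at hadj
      exact .inl ⟨_, mem_ddStep.2 (.inr ⟨r, hr, har, s, hs, hadj, has, rfl⟩), hcomb r hr s hs⟩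

theorem IsDDState.ddStep (h : IsDDState d L R) (a : List ℤ) :
    IsDDState d (a :: L) (ddStep a R) where
  length_eq t ht := by
    obtain ⟨r, hr, -, rfl⟩ | ⟨r, hr, -, s, hs, -, -, rfl⟩ := mem_ddStep.1 ht
    · exact h.length_eq r hr
    · simp [combineRays, h.length_eq r hr, h.length_eq s hs]
  mask_eq t ht := by
    obtain ⟨r, hr, -, rfl⟩ | ⟨r, hr, har, s, hs, -, has, rfl⟩ := mem_ddStep.1 ht
    · rw [h.mask_eq r hr, tightMask]
    · exact h.mask_combineRays hr hs har has
  separating x hx := h.separating x fun b hb => hx b (List.mem_cons_of_mem a hb)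
  isDDPair := h.isDDPair_ddStep a

theorem forall_mem_unitRows {P : List ℤ → Prop} :
    (∀ r ∈ unitRows d, P r) ↔ ∀ i : Fin d, P (List.ofFn (Pi.single i 1)) := by
  simp [unitRows]

theorem rowVec_unit (i : Fin d) : rowVec d (List.ofFn (Pi.single i 1)) = Pi.single i 1 := by
  ext j
  simp [rowVec_ofFn, Pi.single_apply]

theorem rowForm_unit (i : Fin d) (x : Fin d → ℚ) :
    rowForm d (List.ofFn (Pi.single i 1)) x = x i := by
  simp [rowForm, rowVec_unit, Pi.single_apply]

theorem mem_dual_rowForm {A : List (List ℤ)} {x : Fin d → ℚ} :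
    x ∈ dual .id (rowForm d '' {a | a ∈ A ++ unitRows d}) ↔
      0 ≤ x ∧ ∀ a ∈ A, 0 ≤ rowForm d a x := by
  have : (∀ a ∈ unitRows d, 0 ≤ rowForm d a x) ↔ 0 ≤ x := by
    simp only [forall_mem_unitRows, rowForm_unit]
    rfl
  simp [or_imp, forall_and, this, and_comm]

theorem isDDState_unitRows :
    IsDDState d (unitRows d) ((unitRows d).map fun r => ⟨r, tightMask (unitRows d) r⟩) where
  length_eq := by simpa using fun r => length_of_mem_unitRows
  mask_eq := by simp
  separating x hx := by
    rw [forall_mem_unitRows] at hx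
    exact funext fun i => by simpa [rowForm_unit] using hx i
  isDDPair := by
    have hrays : (fun r => rowVec d r.row) ''
        {r | r ∈ (unitRows d).map fun r => MaskedRay.mk r (tightMask (unitRows d) r)} =
          Set.range fun i => Pi.single i (1 : ℚ) := by
      ext x
      simp [unitRows, List.mem_ofFn', rowVec_unit]
    rw [hrays]
    refine ⟨by simp, le_antisymm (Submodule.span_le.2 ?_) fun x hx => ?_⟩
    · rintro _ ⟨i, rfl⟩
      exact (mem_dual_rowForm (A := [])).2 ⟨Pi.single_nonneg.2 zero_le_one, by simp⟩
    · rw [← Finset.univ_sum_single x]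
      refine sum_mem fun i _ => ?_
      have hxi : 0 ≤ x i := ((mem_dual_rowForm (A := [])).1 hx).1 i
      have hsingle : Pi.single i 1 ∈ hull ℚ (Set.range fun i : Fin d => Pi.single i (1 : ℚ)) :=
        subset_hull (Set.mem_range_self i)
      simpa [← Pi.single_smul'] using (hull ℚ _).smul_mem hxi hsingle

theorem isDDState_doubleDescription (A : List (List ℤ)) :
    IsDDState d (A ++ unitRows d) (doubleDescription d A) := by
  induction A with
  | nil => exact isDDState_unitRows
  | cons a A ih => exact ih.ddStep a

theorem mem_hull_doubleDescription {A : List (List ℤ)} {x : Fin d → ℚ} :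
    x ∈ hull ℚ ((fun r => rowVec d r.row) '' {r | r ∈ doubleDescription d A}) ↔
      0 ≤ x ∧ ∀ a ∈ A, 0 ≤ rowForm d a x := by
  rw [(isDDState_doubleDescription A).isDDPair.hull_eq, mem_dual_rowForm]

end ListDoubleDescription

section BasicCombination

variable {ι K E : Type*} [Fintype ι] [Field K] [AddCommGroup E] [Module K E]

variable (K) in
/-- Basic solutions in the sense of linear programming: the vectors `v i` with `c i ≠ 0` are
linearly independent. -/
def IsBasicCombination (v : ι → E) (c : ι → K) : Prop :=
  ∀ d : ι → K, Fintype.linearCombination K v d = 0 → (∀ i, c i = 0 → d i = 0) → d = 0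

theorem finite_setOf_isBasicCombination (v : ι → E) (y : E) :
    {c : ι → K | Fintype.linearCombination K v c = y ∧ IsBasicCombination K v c}.Finite := by
  refine Set.Finite.of_injOn (f := Function.support) (Set.mapsTo_univ _ _) ?_ Set.finite_univ
  rintro c ⟨hc, hbasic⟩ c' ⟨hc', -⟩ hcc'
  refine sub_eq_zero.1 (hbasic _ (by rw [map_sub, hc, hc', sub_self]) fun i hi => ?_)
  have : c i = 0 ↔ c' i = 0 := by simpa [not_iff_not] using Set.ext_iff.1 hcc' i
  simp [hi, this.1 hi]

end BasicCombination

section LexMinSupport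

variable {ι K E : Type*} [Fintype ι] [LinearOrder ι] [Field K] [LinearOrder K]
  [IsStrictOrderedRing K] [AddCommGroup E] [Module K E] {v : ι → E} {S : Finset ι}
  {c c' : ι → K}

instance : PosSMulStrictMono K (Lex (ι → K)) where
  smul_lt_smul_of_pos_left := by
    rintro t ht _ _ ⟨i, hlt, hi⟩
    exact ⟨i, fun j hj => congrArg (t * ·) (hlt j hj), mul_lt_mul_of_pos_left hi ht⟩

variable (K v) in
/-- `S` carries the lexicographically least nonnegative combination of `v` representing its value:
no relation along which a combination supported on `S` could move is lexicographically negative. -/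
def IsLexMinSupport (S : Finset ι) : Prop :=
  ∀ d : ι → K, Fintype.linearCombination K v d = 0 → (∀ i ∉ S, 0 ≤ d i) → 0 ≤ toLex d

theorem IsLexMinSupport.eq_zero (hS : IsLexMinSupport K v S) {d : ι → K}
    (hd : Fintype.linearCombination K v d = 0) (hsupp : ∀ i ∉ S, d i = 0) : d = 0 := by
  have hneg := hS (-d) (by simp [hd]) fun i hi => by simp [hsupp i hi]
  rw [toLex_neg, neg_nonneg] at hneg
  exact hneg.antisymm (hS d hd fun i hi => (hsupp i hi).ge)

theorem IsLexMinSupport.linearIndependent (hS : IsLexMinSupport K v S) :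
    LinearIndependent K fun i : S => v i := by
  refine linearIndepOn_finset_iff.2 fun f hf i hi => ?_
  have := hS.eq_zero (d := fun i => if i ∈ S then f i else 0)
    (by simpa [Fintype.linearCombination_apply, ite_smul, Finset.sum_ite_mem] using hf)
    fun i hi => if_neg hi
  simpa [hi] using congrFun this i

theorem IsLexMinSupport.toLex_le (hS : IsLexMinSupport K v S) (hc' : 0 ≤ c')
    (hsupp : ∀ i ∉ S, c i = 0)
    (h : Fintype.linearCombination K v c = Fintype.linearCombination K v c') :
    toLex c ≤ toLex c' := by
  rw [← sub_nonneg, ← toLex_sub]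
  refine hS _ (by rw [map_sub, h, sub_self]) fun i hi => ?_
  simpa [hsupp i hi] using hc' i

theorem exists_toLex_le_card_support_lt (hc : 0 ≤ c) {d : ι → K}
    (hd : Fintype.linearCombination K v d = 0) (hd0 : d ≠ 0) (hsupp : ∀ i, c i = 0 → d i = 0) :
    ∃ c' : ι → K, 0 ≤ c' ∧ toLex c' ≤ toLex c ∧
      Fintype.linearCombination K v c' = Fintype.linearCombination K v c ∧
      Finset.card {i | c' i ≠ 0} < Finset.card {i | c i ≠ 0} := by
  wlog hlt : toLex d < 0 generalizing d
  · refine this (d := -d) (by simp [hd]) (neg_ne_zero.2 hd0) (by simpa using hsupp) ?_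
    rw [toLex_neg, neg_lt_zero]
    exact (not_lt.1 hlt).lt_of_ne' hd0
  have hneg : ∃ i, d i < 0 := by
    obtain ⟨i, -, hi⟩ := hlt
    exact ⟨i, hi⟩
  obtain ⟨t, ht, hnonneg, i, hi, hzero⟩ := exists_nonneg_add_smul_of_neg hc hneg
  refine ⟨c + t • d, hnonneg, ?_, by simp [hd], Finset.card_lt_card ?_⟩
  · rw [toLex_add, toLex_smul]
    exact add_le_of_nonpos_right (smul_nonpos_of_nonneg_of_nonpos ht hlt.le)
  · refine Finset.ssubset_iff_of_subset (fun j hj => ?_) |>.2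
      ⟨i, by simpa using fun h => hi.ne (hsupp i h), by simpa using hzero⟩
    simp only [Finset.mem_filter, Finset.mem_univ, true_and] at hj ⊢
    exact fun h => hj (by simp [h, hsupp j h])

variable (v) in
theorem exists_toLex_le_isBasicCombination (hc : 0 ≤ c) :
    ∃ c' : ι → K, 0 ≤ c' ∧ toLex c' ≤ toLex c ∧
      Fintype.linearCombination K v c' = Fintype.linearCombination K v c ∧
      IsBasicCombination K v c' := by
  induction hn : Finset.card {i | c i ≠ 0} using Nat.strong_induction_on generalizing c with
  | _ n ih =>
    subst hn
    by_contra! hdep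
    simp only [IsBasicCombination, not_forall] at hdep
    obtain ⟨d, hd, hsupp, hd0⟩ := hdep c hc le_rfl rfl
    obtain ⟨c₁, hc₁, hle₁, heq₁, hlt⟩ := exists_toLex_le_card_support_lt hc hd hd0 hsupp
    obtain ⟨c₂, hc₂, hle₂, heq₂, h₂⟩ := ih _ hlt hc₁ rfl
    obtain ⟨d, hd, hsupp, hd0⟩ := hdep c₂ hc₂ (hle₂.trans hle₁) (heq₂.trans heq₁)
    exact hd0 (h₂ d hd hsupp)

variable (v) in
theorem exists_isLexMinSupport (hc : 0 ≤ c) :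
    ∃ c' : ι → K, 0 ≤ c' ∧
      Fintype.linearCombination K v c' = Fintype.linearCombination K v c ∧
      IsLexMinSupport K v {i | c' i ≠ 0} := by
  have hfin := (finite_setOf_isBasicCombination v
    (Fintype.linearCombination K v c)).inter_of_right {c' : ι → K | 0 ≤ c'}
  obtain ⟨c₁, hc₁, -, heq₁, hbasic₁⟩ := exists_toLex_le_isBasicCombination v hc
  obtain ⟨m, ⟨hm, hmeq, -⟩, hmin⟩ :=
    Set.exists_min_image _ toLex hfin ⟨c₁, hc₁, heq₁, hbasic₁⟩
  refine ⟨m, hm, hmeq, fun d hd hsupp => ?_⟩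
  obtain ⟨t, ht, hnonneg⟩ := exists_pos_nonneg_add_smul hm fun i hi => hsupp i (by simpa using hi)
  obtain ⟨c₂, hc₂, hle, heq₂, hbasic₂⟩ := exists_toLex_le_isBasicCombination v hnonneg
  have := (hmin c₂ ⟨hc₂, by simp [heq₂, hd, hmeq], hbasic₂⟩).trans hle
  rw [toLex_add, le_add_iff_nonneg_right, toLex_smul] at this
  exact (smul_nonneg_iff_nonneg_of_pos_left ht).1 this

end LexMinSupport

section HalfOpenCone

open Filter PointedCone

variable {ι K E : Type*} [Fintype ι] [Field K] [AddCommGroup E] [Module K E] {v : ι → E}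
  {S S' : Finset ι} {x q : E} {a : ι → K}

theorem sum_coe_smul (ha : ∀ i ∉ S, a i = 0) : ∑ i : S, a i • v i = ∑ i, a i • v i := by
  rw [Finset.sum_coe_sort S fun i => a i • v i]
  exact Finset.sum_subset S.subset_univ fun i _ hi => by rw [ha i hi, zero_smul]

variable [LinearOrder K]

/-- The cone over a family `v` with the facets opposite to the members indexed by `T` removed. -/
def halfOpenCone (K : Type*) {ι E : Type*} [Fintype ι] [Semiring K] [PartialOrder K]
    [AddCommMonoid E] [Module K E] (v : ι → E) (T : Set ι) : Set E :=
  {x | ∃ c : ι → K, 0 ≤ c ∧ (∀ i ∈ T, 0 < c i) ∧ ∑ i, c i • v i = x}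

/-- The relatively open cone over the members of `v` indexed by `S`. -/
def openCone (K : Type*) {ι E : Type*} [Fintype ι] [Semiring K] [PartialOrder K]
    [AddCommMonoid E] [Module K E] (v : ι → E) (S : Finset ι) : Set E :=
  {x | ∃ c : ι → K, (∀ i ∉ S, c i = 0) ∧ (∀ i ∈ S, 0 < c i) ∧
    Fintype.linearCombination K v c = x}

theorem mem_halfOpenCone_coe {T : Set ι} :
    x ∈ halfOpenCone K (fun i : S => v i) {i | (i : ι) ∈ T} ↔
      ∃ c : ι → K, 0 ≤ c ∧ (∀ i ∉ S, c i = 0) ∧ (∀ i ∈ S, i ∈ T → 0 < c i) ∧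
        Fintype.linearCombination K v c = x := by
  constructor
  · rintro ⟨c, hc, hpos, rfl⟩
    classical
    refine ⟨fun i => if hi : i ∈ S then c ⟨i, hi⟩ else 0, fun i => ?_, fun i hi => dif_neg hi,
      fun i hi hT => ?_, ?_⟩
    · by_cases hi : i ∈ S
      · simpa [hi] using hc ⟨i, hi⟩
      · simp [hi]
    · simpa [hi] using hpos ⟨i, hi⟩ hT
    · rw [Fintype.linearCombination_apply, ← sum_coe_smul fun i hi => dif_neg hi]
      simp
  · rintro ⟨c, hc, hcS, hpos, rfl⟩
    exact ⟨fun i => c i, fun i => hc i, fun i hi => hpos i i.2 hi, sum_coe_smul hcS⟩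

variable [IsStrictOrderedRing K]

theorem mem_hull_range :
    x ∈ hull K (Set.range v) ↔ ∃ c : ι → K, 0 ≤ c ∧ ∑ i, c i • v i = x := by
  rw [Submodule.mem_span_range_iff_exists_fun]
  constructor
  · rintro ⟨c, rfl⟩
    exact ⟨fun i => c i, fun i => (c i).2, rfl⟩
  · rintro ⟨c, hc, rfl⟩
    exact ⟨fun i => ⟨c i, hc i⟩, rfl⟩

theorem halfOpenCone_subset_hull (T : Set ι) :
    halfOpenCone K v T ⊆ hull K (Set.range v) := by
  rintro _ ⟨c, hc, -, rfl⟩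
  exact mem_hull_range.2 ⟨c, hc, rfl⟩

theorem eventually_pos_mul_add_iff (x a : K) :
    ∀ᶠ t in atTop, 0 < t * x + a ↔ 0 < x ∨ x = 0 ∧ 0 < a := by
  obtain hx | rfl | hx := lt_trichotomy x 0
  · filter_upwards [eventually_ge_atTop (-a / x)] with t ht
    rw [div_le_iff_of_neg hx] at ht
    simp [hx.not_gt, hx.ne, show t * x + a ≤ 0 by linarith]
  · simp
  · filter_upwards [eventually_gt_atTop (-a / x)] with t ht
    rw [div_lt_iff₀ hx] at ht
    simp [hx, show 0 < t * x + a by linarith]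

theorem eventually_smul_add_mem_openCone (ha : ∀ i ∉ S, a i = 0)
    (haq : Fintype.linearCombination K v a = q)
    (hx : x ∈ halfOpenCone K (fun i : S => v i) {i | a i ≤ 0}) :
    ∀ᶠ t : K in atTop, t • x + q ∈ openCone K v S := by
  obtain ⟨b, hb, hbS, hpos, hbx⟩ := (mem_halfOpenCone_coe (T := {i | a i ≤ 0})).1 hx
  filter_upwards [eventually_all.2 fun i => eventually_pos_mul_add_iff (b i) (a i)] with t ht
  refine ⟨t • b + a, fun i hi => by simp [ha i hi, hbS i hi], fun i hi => (ht i).2 ?_,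
    by rw [map_add, map_smul, hbx, haq]⟩
  obtain hai | hai := le_or_gt (a i) 0
  · exact .inl (hpos i hi hai)
  · exact (hb i).lt_or_eq.imp id fun h => ⟨h.symm, hai⟩

variable [LinearOrder ι]

theorem IsLexMinSupport.eq_of_mem_openCone (hS : IsLexMinSupport K v S)
    (hS' : IsLexMinSupport K v S') (hx : x ∈ openCone K v S) (hx' : x ∈ openCone K v S') :
    S = S' := by
  obtain ⟨c, hc, hpos, hsum⟩ := hx
  obtain ⟨c', hc', hpos', hsum'⟩ := hx'
  have hnonneg : ∀ {S : Finset ι} {c : ι → K}, (∀ i ∉ S, c i = 0) → (∀ i ∈ S, 0 < c i) → 0 ≤ c :=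
    fun {S c} h h' i => if hi : i ∈ S then (h' i hi).le else (h i hi).ge
  have heq : c = c' := toLex.injective <|
    (hS.toLex_le (hnonneg hc' hpos') hc (hsum.trans hsum'.symm)).antisymm
      (hS'.toLex_le (hnonneg hc hpos) hc' (hsum'.trans hsum.symm))
  ext i
  exact ⟨fun hi => by_contra fun hi' => (hpos i hi).ne' (heq ▸ hc' i hi'),
    fun hi => by_contra fun hi' => (hpos' i hi).ne' (heq ▸ hc i hi')⟩

theorem exists_frequently_smul_add_mem_openCone (hx : x ∈ hull K (Set.range v))
    (hq : q ∈ hull K (Set.range v)) :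
    ∃ S, ∃ᶠ t : K in atTop, IsLexMinSupport K v S ∧ t • x + q ∈ openCone K v S := by
  refine frequently_exists.1 (Eventually.frequently ?_)
  filter_upwards [eventually_ge_atTop 0] with t ht
  obtain ⟨c, hc, hsum⟩ := mem_hull_range.1 (add_mem ((hull K _).smul_mem ht hx) hq)
  obtain ⟨c', hc', heq, hmin⟩ := exists_isLexMinSupport v hc
  refine ⟨_, hmin, c', by simp, fun i hi => (hc' i).lt_of_ne' (by simpa using hi), ?_⟩
  rw [heq, Fintype.linearCombination_apply, hsum]

theorem IsLexMinSupport.exists_mem_halfOpenCone (hS : IsLexMinSupport K v S)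
    (hfreq : ∃ᶠ t : K in atTop, t • x + q ∈ openCone K v S) :
    ∃ a : ι → K, (∀ i ∉ S, a i = 0) ∧ Fintype.linearCombination K v a = q ∧
      x ∈ halfOpenCone K (fun i : S => v i) {i | a i ≤ 0} := by
  obtain ⟨t₀, c₀, hc₀, -, hsum₀⟩ := hfreq.exists
  obtain ⟨t₁, ⟨c₁, hc₁, -, hsum₁⟩, hlt⟩ := (hfreq.and_eventually (eventually_gt_atTop t₀)).exists
  have hne : t₁ - t₀ ≠ 0 := sub_ne_zero.2 hlt.ne'
  obtain ⟨b, hbS, hbx⟩ : ∃ b : ι → K, (∀ i ∉ S, b i = 0) ∧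
      Fintype.linearCombination K v b = x := by
    refine ⟨(t₁ - t₀)⁻¹ • (c₁ - c₀), fun i hi => by simp [hc₀ i hi, hc₁ i hi], ?_⟩
    rw [map_smul, map_sub, hsum₀, hsum₁, add_sub_add_right_eq_sub, ← sub_smul, inv_smul_smul₀ hne]
  obtain ⟨a, haS, haq⟩ : ∃ a : ι → K, (∀ i ∉ S, a i = 0) ∧
      Fintype.linearCombination K v a = q := by
    refine ⟨c₀ - t₀ • b, fun i hi => by simp [hbS i hi, hc₀ i hi], ?_⟩
    rw [map_sub, map_smul, hbx, hsum₀, add_sub_cancel_left]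
  obtain ⟨t, ⟨c, hc, hpos, hsum⟩, ht⟩ := (hfreq.and_eventually (eventually_all.2 fun i =>
    eventually_pos_mul_add_iff (b i) (a i))).exists
  have hct : c = t • b + a := by
    refine sub_eq_zero.1 (hS.eq_zero ?_ fun i hi => by simp [hc i hi, haS i hi, hbS i hi])
    rw [map_sub, map_add, map_smul, hbx, haq, hsum, sub_self]
  have hgerm : ∀ i ∈ S, 0 < b i ∨ b i = 0 ∧ 0 < a i := fun i hi =>
    (ht i).1 (by simpa [hct] using hpos i hi)
  refine ⟨a, haS, haq, (mem_halfOpenCone_coe (T := {i | a i ≤ 0})).2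
    ⟨b, fun i => ?_, hbS, fun i hi hai => ?_, hbx⟩⟩
  · by_cases hi : i ∈ S
    · exact (hgerm i hi).elim le_of_lt fun h => h.1.ge
    · exact (hbS i hi).ge
  · exact (hgerm i hi).resolve_right fun h => h.2.not_ge hai

end HalfOpenCone

open PointedCone in
theorem exists_halfOpenCone_decomposition {ι K E : Type*} [Finite ι] [Field K] [LinearOrder K]
    [IsStrictOrderedRing K] [AddCommGroup E] [Module K E] {v : ι → E} {q : E}
    (hq : q ∈ hull K (Set.range v)) :
    ∃ (𝒞 : Set (Finset ι)) (a : Finset ι → ι → K),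
      (∀ S ∈ 𝒞, LinearIndependent K (fun i : S => v i) ∧ ∑ i : S, a S i • v i = q) ∧
      𝒞.PairwiseDisjoint (fun S => halfOpenCone K (fun i : S => v i) {i | a S i ≤ 0}) ∧
      ⋃ S ∈ 𝒞, halfOpenCone K (fun i : S => v i) {i | a S i ≤ 0} = hull K (Set.range v) := by
  cases nonempty_fintype ι
  let : LinearOrder ι := IsWellOrder.linearOrder WellOrderingRel
  set 𝒞 : Set (Finset ι) := {S | IsLexMinSupport K v S ∧
    ∃ a : ι → K, (∀ i ∉ S, a i = 0) ∧ Fintype.linearCombination K v a = q}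
  have hcoord : ∀ S ∈ 𝒞, ∃ a : ι → K, (∀ i ∉ S, a i = 0) ∧
    Fintype.linearCombination K v a = q := fun S hS => hS.2
  choose! a haS haq using hcoord
  refine ⟨𝒞, a, fun S hS => ⟨hS.1.linearIndependent, (sum_coe_smul (haS S hS)).trans (haq S hS)⟩,
    fun S hS S' hS' hne => Set.disjoint_left.2 fun x hx hx' => hne ?_,
    subset_antisymm (Set.iUnion₂_subset fun S _ => (halfOpenCone_subset_hull _).trans <|
      Submodule.span_mono (Set.range_comp_subset_range _ v)) fun x hx => ?_⟩
  · obtain ⟨t, ht, ht'⟩ := ((eventually_smul_add_mem_openCone (haS S hS) (haq S hS) hx).and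
      (eventually_smul_add_mem_openCone (haS S' hS') (haq S' hS') hx')).exists
    exact hS.1.eq_of_mem_openCone hS'.1 ht ht'
  · obtain ⟨S, hfreq⟩ := exists_frequently_smul_add_mem_openCone hx hq
    obtain ⟨t, hmin, -⟩ := hfreq.exists
    obtain ⟨a', haS', haq', hmem⟩ := hmin.exists_mem_halfOpenCone (hfreq.mono fun t h => h.2)
    have hS : S ∈ 𝒞 := ⟨hmin, a', haS', haq'⟩
    have : a' = a S := sub_eq_zero.1 <| hmin.eq_zero (by rw [map_sub, haq', haq S hS, sub_self])
      fun i hi => by simp [haS' i hi, haS S hS i hi]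
    exact Set.mem_iUnion₂.2 ⟨S, hS, this ▸ hmem⟩

section HasPolynomialCount

open Polynomial

variable {σ α α' : Type*} {d d' : ℕ} {S : (σ → ℤ) → Set α} {S' : (σ → ℤ) → Set α'}

/-- The family `S` is counted, at nonnegative parameters, by a polynomial of total degree at most
`d` in its parameters. -/
def HasPolynomialCount (d : ℕ) (S : (σ → ℤ) → Set α) : Prop :=
  ∃ f : MvPolynomial σ ℚ, f.totalDegree ≤ d ∧ ∀ k : σ → ℤ, (∀ i, 0 ≤ k i) →
    (S k).Finite ∧ ((S k).ncard : ℚ) = MvPolynomial.eval (fun i => (k i : ℚ)) f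

theorem HasPolynomialCount.mono (h : HasPolynomialCount d S) (hd : d ≤ d') :
    HasPolynomialCount d' S :=
  let ⟨f, hf, hcount⟩ := h
  ⟨f, hf.trans hd, hcount⟩

theorem HasPolynomialCount.of_bijOn (h : HasPolynomialCount d S) (g : α → α')
    (hg : ∀ k : σ → ℤ, (∀ i, 0 ≤ k i) → Set.BijOn g (S k) (S' k)) : HasPolynomialCount d S' :=
  let ⟨f, hf, hcount⟩ := h
  ⟨f, hf, fun k hk => ⟨(hg k hk).finite_iff_finite.1 (hcount k hk).1,
    (hg k hk).ncard_eq ▸ (hcount k hk).2⟩⟩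

theorem HasPolynomialCount.biUnion {ι : Type*} {s : Set ι} (hs : s.Finite)
    {S : ι → (σ → ℤ) → Set α} (h : ∀ i ∈ s, HasPolynomialCount d (S i))
    (hdisj : ∀ k, s.PairwiseDisjoint fun i => S i k) :
    HasPolynomialCount d fun k => ⋃ i ∈ s, S i k := by
  choose! f hf hcount using h
  refine ⟨∑ i ∈ hs.toFinset, f i,
    MvPolynomial.totalDegree_finsetSum_le fun i hi => hf i (hs.mem_toFinset.1 hi), fun k hk =>
    ⟨hs.biUnion fun i hi => (hcount i hi k hk).1, ?_⟩⟩
  rw [hs.ncard_biUnion (fun i hi => (hcount i hi k hk).1) (hdisj k),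
    finsum_mem_eq_finite_toFinset_sum _ hs, map_sum, Nat.cast_sum]
  exact Finset.sum_congr rfl fun i hi => (hcount i (hs.mem_toFinset.1 hi) k hk).2

theorem totalDegree_toMvPolynomial_le (p : ℚ[X]) (i : σ) :
    (p.toMvPolynomial i).totalDegree ≤ p.natDegree := by
  rw [Polynomial.toMvPolynomial, aeval_eq_sum_range]
  refine MvPolynomial.totalDegree_finsetSum_le fun n hn => ?_
  refine (MvPolynomial.totalDegree_smul_le _ _).trans ?_
  rw [MvPolynomial.totalDegree_X_pow]
  exact Nat.lt_succ_iff.1 (Finset.mem_range.1 hn)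

theorem eval_preHilbertPoly_eq_zero {d k n : ℕ} (hn : n < k) (hk : k ≤ n + d) :
    (preHilbertPoly ℚ d k).eval (n : ℚ) = 0 := by
  have hroot : (ascPochhammer ℚ d).eval ((n : ℚ) - k + 1) = 0 :=
    (ascPochhammer_eval_eq_zero_iff d _).2 ⟨k - n - 1, by omega, by
      rw [Nat.cast_sub (by omega), Nat.cast_sub hn.le]
      ring⟩
  simp [preHilbertPoly, hroot]

end HasPolynomialCount

section Compositions

open Polynomial

variable {σ β : Type*} [Fintype σ] [DecidableEq σ] [Fintype β]

theorem bijOn_piFinset_finsuppAntidiag [DecidableEq β] (τ : β → σ) (n : σ → ℕ) :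
    Set.BijOn (fun (f : σ → β →₀ ℕ) b => f (τ b) b)
      (Fintype.piFinset fun j => Finset.finsuppAntidiag {b | τ b = j} (n j))
      {m | ∀ j, ∑ b with τ b = j, m b = n j} := by
  refine ⟨fun f hf j => ?_, fun f hf g hg hfg => ?_, fun m hm => ?_⟩
  · rw [← (Finset.mem_finsuppAntidiag.1 (Fintype.mem_piFinset.1 hf j)).1]
    exact Finset.sum_congr rfl fun b hb => congrArg (f · b) (Finset.mem_filter.1 hb).2
  · have hzero : ∀ {f : σ → β →₀ ℕ},
        f ∈ Fintype.piFinset (fun j => Finset.finsuppAntidiag {b | τ b = j} (n j)) →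
        ∀ j b, τ b ≠ j → f j b = 0 := fun hf j b hb => by_contra fun h => hb <| by
      simpa using (Finset.mem_finsuppAntidiag.1 (Fintype.mem_piFinset.1 hf j)).2
        (Finsupp.mem_support_iff.2 h)
    ext j b
    obtain rfl | hb := eq_or_ne (τ b) j
    · exact congrFun hfg b
    · rw [hzero hf j b hb, hzero hg j b hb]
  · refine ⟨fun j => Finsupp.equivFunOnFinite.symm fun b => if τ b = j then m b else 0,
      Fintype.mem_piFinset.2 fun j => Finset.mem_finsuppAntidiag.2 ⟨?_, fun b => ?_⟩, by simp⟩
    · rw [← hm j]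
      exact Finset.sum_congr rfl fun b hb => if_pos (Finset.mem_filter.1 hb).2
    · simp +contextual

theorem ncard_setOf_sum_fiber_eq (τ : β → σ) (n : σ → ℕ) :
    {m : β → ℕ | ∀ j, ∑ b with τ b = j, m b = n j}.ncard =
      ∏ j, (Finset.card {b | τ b = j} + n j - 1).choose (n j) := by
  classical
  rw [← (bijOn_piFinset_finsuppAntidiag τ n).ncard_eq, Set.ncard_coe_finset,
    Fintype.card_piFinset]
  simp_rw [Finset.card_finsuppAntidiag_nat_eq_choose]

theorem ncard_setOf_add_sum_fiber_eq {τ : β → σ} {δ : σ → ℕ}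
    (hδ : ∀ j, δ j < Finset.card {b | τ b = j}) (n : σ → ℕ) :
    ({m : β → ℕ | ∀ j, δ j + ∑ b with τ b = j, m b = n j}.ncard : ℚ) =
      ∏ j, (preHilbertPoly ℚ (Finset.card {b | τ b = j} - 1) (δ j)).eval (n j : ℚ) := by
  by_cases! h : ∀ j, δ j ≤ n j
  · have hset : {m : β → ℕ | ∀ j, δ j + ∑ b with τ b = j, m b = n j} =
        {m | ∀ j, ∑ b with τ b = j, m b = n j - δ j} :=
      Set.ext fun m => forall_congr' fun j => by have := h j; omega
    rw [hset, ncard_setOf_sum_fiber_eq, Nat.cast_prod]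
    refine Finset.prod_congr rfl fun j _ => ?_
    rw [preHilbertPoly_eq_choose_sub_add _ _ (h j)]
    have hsymm : Finset.card {b | τ b = j} + (n j - δ j) - 1 =
        (n j - δ j) + (Finset.card {b | τ b = j} - 1) := by have := hδ j; omega
    rw [Nat.choose_symm_of_eq_add hsymm, hsymm]
  · obtain ⟨j, hj⟩ := h
    have hempty : {m : β → ℕ | ∀ j, δ j + ∑ b with τ b = j, m b = n j} = ∅ :=
      Set.eq_empty_of_forall_notMem fun m hm => by have := hm j; omega
    rw [hempty, Set.ncard_empty, Nat.cast_zero, Finset.prod_eq_zero (Finset.mem_univ j)]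
    exact eval_preHilbertPoly_eq_zero hj (by have := hδ j; omega)

theorem hasPolynomialCount_compositions {τ : β → σ} {δ : σ → ℕ}
    (hδ : ∀ j, δ j < Finset.card {b | τ b = j}) :
    HasPolynomialCount (Fintype.card β - Fintype.card σ) fun k : σ → ℤ =>
      {m : β → ℕ | ∀ j, ((δ j + ∑ b with τ b = j, m b : ℕ) : ℤ) = k j} := by
  refine ⟨∏ j, (preHilbertPoly ℚ (Finset.card {b | τ b = j} - 1) (δ j)).toMvPolynomial j,
    ?_, fun k hk => ?_⟩
  · calc
      _ ≤ ∑ j, (Finset.card {b | τ b = j} - 1) :=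
        (MvPolynomial.totalDegree_finsetProd _ _).trans <| Finset.sum_le_sum fun j _ =>
          (totalDegree_toMvPolynomial_le _ j).trans (natDegree_preHilbertPoly ..).le
      _ = ∑ j, Finset.card {b | τ b = j} - ∑ j : σ, 1 :=
        Finset.sum_tsub_distrib _ fun j _ => (Nat.zero_le _).trans_lt (hδ j)
      _ = Fintype.card β - Fintype.card σ := by
        rw [← Finset.card_eq_sum_card_fiberwise fun b _ => Finset.mem_coe.2 (Finset.mem_univ (τ b))]
        simp
  · lift k to σ → ℕ using hk
    simp only [Nat.cast_inj, Int.cast_natCast, map_prod, MvPolynomial.eval_toMvPolynomial]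
    classical
    refine ⟨Set.Finite.subset ?_ fun m hm j => (by have := hm j; omega :
      ∑ b with τ b = j, m b = k j - δ j), ncard_setOf_add_sum_fiber_eq hδ k⟩
    exact (bijOn_piFinset_finsuppAntidiag τ _).finite_iff_finite.1 (Finset.finite_toSet _)

end Compositions

section HalfOpenBox

variable {β κ : Type*} {T : Set β}

/-- The half-open unit cube, with the facet `f b = 0` removed for `b ∈ T` and the facet `f b = 1`
removed for `b ∉ T`. -/
def halfOpenUnitCube (T : Set β) : Set (β → ℚ) :=
  {f | ∀ b, (b ∈ T → f b ∈ Set.Ioc 0 1) ∧ (b ∉ T → f b ∈ Set.Ico 0 1)}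

theorem mem_Icc_of_mem_halfOpenUnitCube {f : β → ℚ} (hf : f ∈ halfOpenUnitCube T) (b : β) :
    f b ∈ Set.Icc 0 1 := by
  by_cases hb : b ∈ T
  · exact Set.Ioc_subset_Icc_self ((hf b).1 hb)
  · exact Set.Ico_subset_Icc_self ((hf b).2 hb)

theorem exists_sub_mem_halfOpenUnitCube (T : Set β) (c : β → ℚ) :
    ∃ n : β → ℤ, (fun b => c b - n b) ∈ halfOpenUnitCube T := by
  refine Classical.skolem (p := fun b (n : ℤ) =>
    (b ∈ T → c b - n ∈ Set.Ioc 0 1) ∧ (b ∉ T → c b - n ∈ Set.Ico 0 1)) |>.1 fun b => ?_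
  by_cases hb : b ∈ T
  · obtain ⟨n, hn, -⟩ := existsUnique_sub_zsmul_mem_Ioc zero_lt_one (c b) 0
    exact ⟨n, by simpa [hb] using hn⟩
  · obtain ⟨n, hn, -⟩ := existsUnique_sub_zsmul_mem_Ico zero_lt_one (c b) 0
    exact ⟨n, by simpa [hb] using hn⟩

theorem eq_of_add_eq_add_of_mem_halfOpenUnitCube {f f' : β → ℚ} (hf : f ∈ halfOpenUnitCube T)
    (hf' : f' ∈ halfOpenUnitCube T) {n n' : β → ℤ} (h : ∀ b, f b + n b = f' b + n' b) :
    f = f' ∧ n = n' := by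
  have hn : n = n' := funext fun b => by
    have hlt : |f b - f' b| < 1 := by
      by_cases hb : b ∈ T
      · have h₁ := (hf b).1 hb
        have h₂ := (hf' b).1 hb
        exact abs_lt.2 ⟨by linarith [h₁.1, h₂.2], by linarith [h₁.2, h₂.1]⟩
      · have h₁ := (hf b).2 hb
        have h₂ := (hf' b).2 hb
        exact abs_lt.2 ⟨by linarith [h₁.1, h₂.2], by linarith [h₁.2, h₂.1]⟩
    have hcast : ((n' b - n b : ℤ) : ℚ) = f b - f' b := by push_cast; linarith [h b]
    rw [← hcast] at hlt
    have := Int.abs_lt_one_iff.1 (by exact_mod_cast hlt : |n' b - n b| < 1)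
    omega
  exact ⟨funext fun b => by simpa [hn] using h b, hn⟩

variable [Fintype β] {w : β → κ → ℤ} {u u' x : κ → ℤ}

/-- The lattice points of the half-open parallelepiped spanned by `w`. -/
def halfOpenBox (w : β → κ → ℤ) (T : Set β) : Set (κ → ℤ) :=
  {u | ∃ f ∈ halfOpenUnitCube T, ∑ b, f b • (Int.cast ∘ w b : κ → ℚ) = Int.cast ∘ u}

theorem finite_halfOpenBox [Finite κ] (w : β → κ → ℤ) (T : Set β) : (halfOpenBox w T).Finite := by
  classical
  cases nonempty_fintype κ
  refine (Set.finite_Icc (-∑ b, |w b|) (∑ b, |w b|)).subset fun u ⟨f, hf, hu⟩ => ?_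
  suffices ∀ i, |u i| ≤ ∑ b, |w b i| from
    ⟨fun i => by simpa using (abs_le.1 (this i)).1, fun i => by simpa using (abs_le.1 (this i)).2⟩
  intro i
  have hui : ∑ b, f b * w b i = u i := by simpa using congrFun hu i
  have : |(u i : ℚ)| ≤ ∑ b, |(w b i : ℚ)| := by
    rw [← hui]
    refine (Finset.abs_sum_le_sum_abs _ _).trans (Finset.sum_le_sum fun b _ => ?_)
    obtain ⟨h0, h1⟩ := mem_Icc_of_mem_halfOpenUnitCube hf b
    rw [abs_mul, abs_of_nonneg h0]
    exact mul_le_of_le_one_left (abs_nonneg _) h1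
  exact_mod_cast this

theorem nonneg_of_mem_halfOpenBox (hu : u ∈ halfOpenBox w T) {i : κ} (hw : ∀ b, 0 ≤ w b i) :
    0 ≤ u i := by
  obtain ⟨f, hf, hu⟩ := hu
  have hui : ∑ b, f b * w b i = u i := by simpa using congrFun hu i
  have : (0 : ℚ) ≤ u i := hui ▸ Finset.sum_nonneg fun b _ =>
    mul_nonneg (mem_Icc_of_mem_halfOpenUnitCube hf b).1 (mod_cast hw b)
  exact_mod_cast this

theorem lt_sum_of_mem_halfOpenBox (hu : u ∈ halfOpenBox w T) {i : κ} (hw : ∀ b, 0 ≤ w b i)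
    (hT : ∃ b ∉ T, 0 < w b i) : u i < ∑ b, w b i := by
  obtain ⟨f, hf, hu⟩ := hu
  obtain ⟨b, hbT, hb⟩ := hT
  have hui : ∑ b, f b * w b i = u i := by simpa using congrFun hu i
  have : (u i : ℚ) < ∑ b, (w b i : ℚ) := hui ▸ Finset.sum_lt_sum
    (fun b _ => mul_le_of_le_one_left (mod_cast hw b) (mem_Icc_of_mem_halfOpenUnitCube hf b).2)
    ⟨b, Finset.mem_univ b, mul_lt_of_lt_one_left (mod_cast hb) ((hf b).2 hbT).2⟩
  exact_mod_cast this

theorem intCast_comp_add_sum (u : κ → ℤ) (m : β → ℕ) :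
    (Int.cast ∘ (u + ∑ b, m b • w b) : κ → ℚ) =
      Int.cast ∘ u + ∑ b, (m b : ℚ) • (Int.cast ∘ w b) := by
  ext i
  simp

theorem intCast_comp_mem_halfOpenCone_iff :
    Int.cast ∘ x ∈ halfOpenCone ℚ (fun b => (Int.cast ∘ w b : κ → ℚ)) T ↔
      ∃ u ∈ halfOpenBox w T, ∃ m : β → ℕ, u + ∑ b, m b • w b = x := by
  constructor
  · rintro ⟨c, hc, hpos, hx⟩
    obtain ⟨n, hn⟩ := exists_sub_mem_halfOpenUnitCube T c
    have hn0 : ∀ b, 0 ≤ n b := fun b => by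
      suffices (-1 : ℚ) < n b by exact_mod_cast this
      by_cases hb : b ∈ T
      · linarith [hpos b hb, ((hn b).1 hb).2]
      · have : 0 ≤ c b := hc b
        linarith [((hn b).2 hb).2]
    lift n to β → ℕ using hn0
    refine ⟨x - ∑ b, n b • w b, ⟨_, hn, ?_⟩, n, sub_add_cancel _ _⟩
    refine eq_sub_of_add_eq ?_ |>.trans (b := Int.cast ∘ x - ∑ b, (n b : ℚ) • (Int.cast ∘ w b)) ?_
    · simpa [sub_smul] using hx
    · ext i
      simp
  · rintro ⟨u, ⟨f, hf, hu⟩, m, rfl⟩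
    refine ⟨fun b => f b + m b, fun b => ?_, fun b hb => ?_, ?_⟩
    · exact add_nonneg (mem_Icc_of_mem_halfOpenUnitCube hf b).1 (Nat.cast_nonneg _)
    · exact add_pos_of_pos_of_nonneg ((hf b).1 hb).1 (Nat.cast_nonneg _)
    · simp_rw [add_smul, Finset.sum_add_distrib, hu, intCast_comp_add_sum]

theorem eq_of_add_sum_eq_of_mem_halfOpenBox
    (hw : LinearIndependent ℚ fun b => (Int.cast ∘ w b : κ → ℚ)) (hu : u ∈ halfOpenBox w T)
    (hu' : u' ∈ halfOpenBox w T) {m m' : β → ℕ}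
    (h : u + ∑ b, m b • w b = u' + ∑ b, m' b • w b) : u = u' ∧ m = m' := by
  obtain ⟨f, hf, hfu⟩ := hu
  obtain ⟨f', hf', hfu'⟩ := hu'
  have hcast : ∑ b, (f b + m b) • (Int.cast ∘ w b : κ → ℚ) =
      ∑ b, (f' b + m' b) • (Int.cast ∘ w b) := by
    simp_rw [add_smul, Finset.sum_add_distrib, hfu, hfu', ← intCast_comp_add_sum, h]
  have hcoord : ∀ b, f b + m b = f' b + m' b := fun b => sub_eq_zero.1 <|
    Fintype.linearIndependent_iff.1 hw (fun b => f b + m b - (f' b + m' b))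
      (by simp_rw [sub_smul, Finset.sum_sub_distrib, hcast, sub_self]) b
  obtain ⟨rfl, hm⟩ := eq_of_add_eq_add_of_mem_halfOpenUnitCube hf hf'
    (n := fun b => m b) (n' := fun b => m' b) (mod_cast hcoord)
  refine ⟨Int.cast_injective.comp_left (hfu.symm.trans hfu'), funext fun b => ?_⟩
  exact_mod_cast congrFun hm b

end HalfOpenBox

section HalfOpenConeCount

variable {β ι κ σ : Type*} [DecidableEq σ] {e : σ → κ}

theorem apply_eq_ite_of_comp_eq_single {w : β → κ → ℤ} {τ : β → σ}
    (hdeg : ∀ b, w b ∘ e = Pi.single (τ b) 1) (b : β) (j : σ) :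
    w b (e j) = if τ b = j then 1 else 0 := by
  simpa [Pi.single_apply, eq_comm] using congrFun (hdeg b) j

variable [Fintype σ] [Fintype κ]

theorem hasPolynomialCount_add_sum_image [Fintype β] {w : β → κ → ℤ} {τ : β → σ}
    {T : Set β} (hw : LinearIndependent ℚ fun b => (Int.cast ∘ w b : κ → ℚ))
    (hdeg : ∀ b, w b ∘ e = Pi.single (τ b) 1) (hT : ∀ j, ∃ b ∉ T, τ b = j) {u : κ → ℤ}
    (hu : u ∈ halfOpenBox w T) :
    HasPolynomialCount (Fintype.card κ - Fintype.card σ) fun k : σ → ℤ =>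
      {x | x ∘ e = k ∧ ∃ m : β → ℕ, u + ∑ b, m b • w b = x} := by
  have hwe := apply_eq_ite_of_comp_eq_single hdeg
  have hnonneg : ∀ j, 0 ≤ u (e j) := fun j => nonneg_of_mem_halfOpenBox hu fun b => by
    rw [hwe]; positivity
  have hlt : ∀ j, u (e j) < Finset.card {b | τ b = j} := fun j => by
    obtain ⟨b, hbT, hb⟩ := hT j
    exact (lt_sum_of_mem_halfOpenBox hu (fun b => by rw [hwe]; positivity)
      ⟨b, hbT, by simp [hwe, hb]⟩).trans_eq (by simp [hwe])
  have hcard : Fintype.card β ≤ Fintype.card κ := by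
    simpa using hw.fintype_card_le_finrank
  refine (hasPolynomialCount_compositions (τ := τ) (δ := fun j => (u (e j)).toNat) fun j => ?_).mono
    (Nat.sub_le_sub_right hcard _) |>.of_bijOn (fun m => u + ∑ b, m b • w b) fun k _ =>
      ⟨fun m hm => ⟨funext fun j => ?_, m, rfl⟩, fun m _ m' _ h =>
        (eq_of_add_sum_eq_of_mem_halfOpenBox hw hu hu h).2, ?_⟩
  · have := hlt j
    have := hnonneg j
    omega
  · simpa [hwe, Finset.sum_filter, hnonneg j] using hm j
  · rintro _ ⟨hx, m, rfl⟩
    refine ⟨m, fun j => ?_, rfl⟩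
    simpa [hwe, Finset.sum_filter, hnonneg j] using congrFun hx j

theorem hasPolynomialCount_halfOpenCone [Fintype β] {w : β → κ → ℤ} {τ : β → σ} {T : Set β}
    (hw : LinearIndependent ℚ fun b => (Int.cast ∘ w b : κ → ℚ))
    (hdeg : ∀ b, w b ∘ e = Pi.single (τ b) 1) (hT : ∀ j, ∃ b ∉ T, τ b = j) :
    HasPolynomialCount (Fintype.card κ - Fintype.card σ) fun k : σ → ℤ =>
      {x | x ∘ e = k ∧ Int.cast ∘ x ∈ halfOpenCone ℚ (fun b => (Int.cast ∘ w b : κ → ℚ)) T} := by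
  have hunion : ∀ k : σ → ℤ,
      {x | x ∘ e = k ∧ Int.cast ∘ x ∈ halfOpenCone ℚ (fun b => (Int.cast ∘ w b : κ → ℚ)) T} =
        ⋃ u ∈ halfOpenBox w T, {x | x ∘ e = k ∧ ∃ m : β → ℕ, u + ∑ b, m b • w b = x} := fun k => by
    ext x
    simp [intCast_comp_mem_halfOpenCone_iff]
  simp_rw [hunion]
  refine .biUnion (finite_halfOpenBox w T)
    (fun u => hasPolynomialCount_add_sum_image hw hdeg hT) fun k u hu u' hu' hne =>
      Set.disjoint_left.2 ?_
  rintro _ ⟨-, m, rfl⟩ ⟨-, m', h⟩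
  exact hne (eq_of_add_sum_eq_of_mem_halfOpenBox hw hu' hu h).1.symm

open PointedCone in
theorem hasPolynomialCount_hull [Finite ι] {V : ι → κ → ℤ} {τ : ι → σ}
    (hdeg : ∀ i, V i ∘ e = Pi.single (τ i) 1) (hτ : Function.Surjective τ) :
    HasPolynomialCount (Fintype.card κ - Fintype.card σ) fun k : σ → ℤ =>
      {x | x ∘ e = k ∧
        Int.cast ∘ x ∈ hull ℚ (Set.range fun i => (Int.cast ∘ V i : κ → ℚ))} := by
  cases nonempty_fintype ι
  have hVe := apply_eq_ite_of_comp_eq_single hdeg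
  obtain ⟨𝒞, a, h𝒞, hdisj, hunion⟩ := exists_halfOpenCone_decomposition
    (sum_mem fun i _ => subset_hull ⟨i, rfl⟩ :
      ∑ i, (Int.cast ∘ V i : κ → ℚ) ∈ hull ℚ (Set.range fun i => (Int.cast ∘ V i : κ → ℚ)))
  have hT : ∀ S ∈ 𝒞, ∀ j, ∃ b : S, b ∉ {b : S | a S b ≤ 0} ∧ τ b = j := by
    intro S hS j
    obtain ⟨i, hi⟩ := hτ j
    have hpos : 0 < ∑ i, (V i (e j) : ℚ) := Finset.sum_pos' (fun i _ => by rw [hVe]; positivity)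
      ⟨i, Finset.mem_univ i, by simp [hVe, hi]⟩
    have hsum : ∑ b : S, a S b * (V b (e j) : ℚ) = ∑ i, (V i (e j) : ℚ) := by
      simpa using congrFun (h𝒞 S hS).2 (e j)
    obtain ⟨b, -, hb⟩ : ∃ b ∈ Finset.univ, 0 < a S (b : S) * (V b (e j) : ℚ) :=
      Finset.exists_lt_of_sum_lt (by rwa [Finset.sum_const_zero, hsum])
    rw [hVe] at hb
    split_ifs at hb with hbj
    · exact ⟨b, by simpa using hb, hbj⟩
    · simp at hb
  have hslice : ∀ k : σ → ℤ,
      {x | x ∘ e = k ∧ Int.cast ∘ x ∈ hull ℚ (Set.range fun i => (Int.cast ∘ V i : κ → ℚ))} =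
        ⋃ S ∈ 𝒞, {x | x ∘ e = k ∧ Int.cast ∘ x ∈
          halfOpenCone ℚ (fun i : S => (Int.cast ∘ V i : κ → ℚ)) {i | a S i ≤ 0}} := fun k => by
    ext x
    simp only [← SetLike.mem_coe, ← hunion, Set.mem_iUnion, Set.mem_ofPred_eq]
    tauto
  simp_rw [hslice]
  exact .biUnion 𝒞.toFinite
    (fun S hS => hasPolynomialCount_halfOpenCone (h𝒞 S hS).1 (fun b => hdeg b) (hT S hS))
    fun k S hS S' hS' hne => Set.disjoint_left.2 fun x hx hx' =>
      Set.disjoint_left.1 (hdisj hS hS' hne) hx.2 hx'.2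

end HalfOpenConeCount

section LatticeSlice

open PointedCone

variable {m n : ℕ} {A : List (List ℤ)} {k : Fin m → ℤ} {p : Fin n → ℤ}

/-- The integer points over the parameter `k` of the cone
`{(k, p) ∈ ℚ^m × ℚ^n | 0 ≤ k, 0 ≤ p, ∀ a ∈ A, 0 ≤ a ⬝ (k, p)}`. -/
def latticeSlice (n : ℕ) (A : List (List ℤ)) (k : Fin m → ℤ) : Set (Fin n → ℤ) :=
  {p | 0 ≤ p ∧ ∀ a ∈ A, 0 ≤ rowDot a (List.ofFn k ++ List.ofFn p)}

theorem mem_latticeSlice_iff_mem_hull (hk : 0 ≤ k) :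
    p ∈ latticeSlice n A k ↔ (Int.cast ∘ Fin.append k p : Fin (m + n) → ℚ) ∈
      hull ℚ ((fun r => rowVec (m + n) r.row) '' {r | r ∈ doubleDescription (m + n) A}) := by
  have hvec : (Int.cast ∘ Fin.append k p : Fin (m + n) → ℚ) =
      rowVec (m + n) (List.ofFn k ++ List.ofFn p) := by
    rw [← List.ofFn_fin_append, rowVec_ofFn]
    rfl
  have hnonneg : 0 ≤ (Int.cast ∘ Fin.append k p : Fin (m + n) → ℚ) ↔ 0 ≤ p := by
    simp only [Pi.le_def, Fin.forall_fin_add, Function.comp_apply, Fin.append_left,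
      Fin.append_right, Pi.zero_apply, Int.cast_nonneg_iff, and_iff_right_iff_imp]
    exact fun _ => hk
  rw [mem_hull_doubleDescription, hnonneg, hvec]
  simp [rowForm_rowVec, latticeSlice]

theorem exists_eq_single_of_sum_eq_one {σ : Type*} [Fintype σ] [DecidableEq σ] {f : σ → ℤ}
    (hf : 0 ≤ f) (hsum : ∑ i, f i = 1) : ∃ i, f = Pi.single i 1 := by
  lift f to σ → ℕ using hf
  replace hsum : ∑ i, f i = 1 := by
    beta_reduce at hsum
    exact_mod_cast hsum
  obtain ⟨i, hi⟩ := (Finsupp.sum_eq_one_iff (Finsupp.equivFunOnFinite.symm f)).1 <|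
    (Finsupp.sum_fintype _ _ fun _ => rfl).trans hsum
  refine ⟨i, funext fun j => ?_⟩
  simpa [Finsupp.single_apply, Pi.single_apply, eq_comm] using
    congrArg (Nat.cast (R := ℤ)) (DFunLike.congr_fun hi j)

/-- The sum of the first `m` entries of a ray, its degree in the parameters. -/
def MaskedRay.degree (m : ℕ) (r : MaskedRay) : ℤ := (r.row.take m).sum

/-- The point of degree `1` on a ray of `ℚ^d`, provided that it is integral. -/
def MaskedRay.vertex (m d : ℕ) (r : MaskedRay) : Fin d → ℤ :=
  fun i => r.row.getD i 0 / r.degree m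

theorem MaskedRay.degree_mul_vertex {r : MaskedRay} (hdvd : ∀ x ∈ r.row, r.degree m ∣ x)
    {d : ℕ} (i : Fin d) : r.degree m * r.vertex m d i = r.row.getD i 0 := by
  refine Int.mul_ediv_cancel' ?_
  by_cases hi : (i : ℕ) < r.row.length
  · rw [List.getD_eq_getElem _ _ hi]
    exact hdvd _ (List.getElem_mem hi)
  · simp [List.getElem?_eq_none (not_lt.1 hi)]

theorem MaskedRay.smul_vertex {r : MaskedRay} (hdvd : ∀ x ∈ r.row, r.degree m ∣ x) (d : ℕ) :
    (r.degree m : ℚ) • (Int.cast ∘ r.vertex m d : Fin d → ℚ) = rowVec d r.row := by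
  ext i
  rw [rowVec, ← degree_mul_vertex hdvd]
  simp

theorem MaskedRay.degree_eq_sum {r : MaskedRay} (hr : m ≤ r.row.length) :
    r.degree m = ∑ i : Fin m, r.row.getD i 0 := by
  rw [degree, ← List.sum_ofFn]
  congr 1
  exact List.ext_getElem (by simp [hr]) fun i hi _ => by
    simp [List.getElem?_eq_getElem (show i < r.row.length by grind)]

theorem MaskedRay.sum_vertex_eq_one {r : MaskedRay} (hr : m + n ≤ r.row.length)
    (hpos : 0 < r.degree m) (hdvd : ∀ x ∈ r.row, r.degree m ∣ x) :
    ∑ i, r.vertex m (m + n) (Fin.castAdd n i) = 1 := by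
  refine mul_left_cancel₀ hpos.ne' ?_
  rw [Finset.mul_sum, mul_one, degree_eq_sum (show m ≤ r.row.length by omega)]
  exact Finset.sum_congr rfl fun i _ => by
    rw [← degree_eq_sum (by omega), degree_mul_vertex hdvd, Fin.val_castAdd]

theorem exists_vertex_comp_castAdd_eq_single {r : MaskedRay}
    (hr : r ∈ doubleDescription (m + n) A) (hpos : 0 < r.degree m)
    (hdvd : ∀ x ∈ r.row, r.degree m ∣ x) :
    ∃ i, r.vertex m (m + n) ∘ Fin.castAdd n = Pi.single i 1 := by
  have hnonneg : 0 ≤ rowVec (m + n) r.row :=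
    (mem_hull_doubleDescription.1 (subset_hull ⟨r, hr, rfl⟩)).1
  refine exists_eq_single_of_sum_eq_one (fun i => Int.ediv_nonneg ?_ hpos.le)
    (r.sum_vertex_eq_one ((isDDState_doubleDescription A).length_eq r hr).ge hpos hdvd)
  exact Int.cast_nonneg_iff.1 (hnonneg (Fin.castAdd n i))

theorem hull_range_smul {ι K E : Type*} [Field K] [LinearOrder K] [IsStrictOrderedRing K]
    [AddCommGroup E] [Module K E] {c : ι → K} (hc : ∀ i, 0 < c i) (v : ι → E) :
    hull K (Set.range fun i => c i • v i) = hull K (Set.range v) := by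
  refine le_antisymm (Submodule.span_le.2 ?_) (Submodule.span_le.2 ?_)
  · rintro _ ⟨i, rfl⟩
    exact (hull K _).smul_mem (hc i).le (subset_hull ⟨i, rfl⟩)
  · rintro _ ⟨i, rfl⟩
    rw [← inv_smul_smul₀ (hc i).ne' (v i)]
    exact (hull K _).smul_mem (inv_nonneg.2 (hc i).le) (subset_hull ⟨i, rfl⟩)

theorem hull_range_vertex
    (hpos : ∀ r ∈ doubleDescription (m + n) A, 0 < r.degree m)
    (hdvd : ∀ r ∈ doubleDescription (m + n) A, ∀ x ∈ r.row, r.degree m ∣ x) :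
    hull ℚ (Set.range fun r : {r // r ∈ doubleDescription (m + n) A} =>
      (Int.cast ∘ r.1.vertex m (m + n) : Fin (m + n) → ℚ)) =
    hull ℚ ((fun r => rowVec (m + n) r.row) '' {r | r ∈ doubleDescription (m + n) A}) := by
  have hdeg : ∀ r : {r // r ∈ doubleDescription (m + n) A}, 0 < (r.1.degree m : ℚ) :=
    fun r => Int.cast_pos.2 (hpos r r.2)
  rw [Set.image_eq_range, ← hull_range_smul hdeg]
  exact congrArg (fun v => hull ℚ (Set.range v))
    (funext fun r => r.1.smul_vertex (hdvd r r.2) _)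

theorem bijOn_comp_natAdd_latticeSlice (n : ℕ) (A : List (List ℤ)) (hk : 0 ≤ k) :
    Set.BijOn (· ∘ Fin.natAdd m)
      {x : Fin (m + n) → ℤ | x ∘ Fin.castAdd n = k ∧ (Int.cast ∘ x : Fin (m + n) → ℚ) ∈
        hull ℚ ((fun r => rowVec (m + n) r.row) '' {r | r ∈ doubleDescription (m + n) A})}
      (latticeSlice n A k) := by
  have happend : ∀ x : Fin (m + n) → ℤ,
      Fin.append (x ∘ Fin.castAdd n) (x ∘ Fin.natAdd m) = x := fun _ => Fin.append_castAdd_natAdd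
  refine ⟨?_, ?_, fun p hp => ⟨Fin.append k p, ⟨?_, ?_⟩, ?_⟩⟩
  · rintro x ⟨rfl, hx⟩
    rwa [mem_latticeSlice_iff_mem_hull hk, happend]
  · rintro x ⟨hx, -⟩ y ⟨hy, -⟩ hxy
    rw [← happend x, ← happend y, hx, hy, show x ∘ Fin.natAdd m = y ∘ Fin.natAdd m from hxy]
  · ext; simp
  · exact (mem_latticeSlice_iff_mem_hull hk).1 hp
  · ext; simp

theorem hasPolynomialCount_latticeSlice
    (hpos : ∀ r ∈ doubleDescription (m + n) A, 0 < r.degree m)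
    (hdvd : ∀ r ∈ doubleDescription (m + n) A, ∀ x ∈ r.row, r.degree m ∣ x)
    (hne : ∀ i : Fin m, (latticeSlice n A (Pi.single i 1)).Nonempty) :
    HasPolynomialCount n (latticeSlice n A : (Fin m → ℤ) → Set (Fin n → ℤ)) := by
  have : Finite {r // r ∈ doubleDescription (m + n) A} := (List.finite_toSet _).to_subtype
  choose τ hτ using fun r : {r // r ∈ doubleDescription (m + n) A} =>
    exists_vertex_comp_castAdd_eq_single r.2 (hpos r r.2) (hdvd r r.2)
  have hsurj : Function.Surjective τ := by
    intro i
    obtain ⟨p, hp⟩ := hne i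
    rw [mem_latticeSlice_iff_mem_hull (Pi.single_nonneg.2 zero_le_one),
      ← hull_range_vertex hpos hdvd] at hp
    by_contra! hi
    have hzero : ∀ x ∈ hull ℚ (Set.range fun r : {r // r ∈ doubleDescription (m + n) A} =>
        (Int.cast ∘ r.1.vertex m (m + n) : Fin (m + n) → ℚ)), x (Fin.castAdd n i) = 0 := by
      intro x hx
      induction hx using Submodule.span_induction with
      | mem x hx =>
        obtain ⟨r, rfl⟩ := hx
        simpa [hi r] using congrFun (hτ r) i
      | zero => rfl
      | add x y _ _ hx hy => simp [hx, hy]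
      | smul c x _ hx => simp [hx]
    simpa using hzero _ hp
  have hcount := hasPolynomialCount_hull hτ hsurj
  rw [hull_range_vertex hpos hdvd] at hcount
  simpa using hcount.of_bijOn _ fun k hk => bijOn_comp_natAdd_latticeSlice n A hk

end LatticeSlice

section SigmaSet

/-- The coefficient vectors of `k` and of `p` in each of the inequalities of `SatisfiesIneqs`,
ordered so that `doubleDescription`, which treats the last one first, meets few rays on the way. -/
def sigmaTable : List (List ℤ × List ℤ) :=
  [([1, 2, 2, 1], [1, 1, 1, 1, 1, 0, 1, 1, 2, 1, 1, 0]),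
   ([1, 2, 2, 1], [1, 0, 1, 1, 1, 1, 1, 1, 2, 1, 1, 0]),
   ([1, 3, 3, 2], [1, 1, 1, 2, 2, 1, 1, 1, 3, 2, 2, 0]),
   ([1, 2, 2, 1], [0, 0, 1, 1, 1, 1, 1, 1, 2, 1, 1, 1]),
   ([1, 2, 1, 1], [1, 0, 1, 1, 1, 1, 1, 1, 1, 0, 1, 0]),
   ([1, 2, 2, 1], [0, 1, 1, 1, 1, 0, 1, 1, 2, 1, 1, 1]),
   ([1, 2, 1, 1], [1, 1, 1, 1, 1, 0, 1, 1, 1, 0, 1, 0]),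
   ([1, 1, 1, 0], [0, 0, 0, 0, 0, 0, 1, 1, 1, 1, 0, 1]),
   ([1, 2, 1, 1], [0, 0, 1, 1, 1, 1, 1, 1, 1, 0, 1, 1]),
   ([1, 2, 1, 1], [1, 0, 0, 1, 1, 1, 1, 1, 1, 1, 1, 0]),
   ([1, 3, 1, 2], [1, 1, 1, 2, 2, 1, 1, 1, 1, 0, 2, 0]),
   ([1, 2, 1, 1], [0, 1, 1, 1, 1, 0, 1, 1, 1, 0, 1, 1]),
   ([2, 2, 2, 1], [0, 0, 1, 1, 1, 1, 2, 1, 2, 1, 1, 2]),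
   ([2, 2, 1, 1], [0, 0, 1, 1, 1, 1, 2, 1, 1, 0, 1, 2]),
   ([2, 3, 1, 2], [1, 1, 1, 2, 2, 1, 2, 1, 1, 0, 2, 1]),
   ([2, 3, 3, 2], [1, 1, 1, 2, 2, 1, 2, 1, 3, 2, 2, 1]),
   ([2, 2, 2, 1], [0, 1, 1, 1, 1, 0, 2, 1, 2, 1, 1, 2]),
   ([2, 2, 1, 1], [0, 1, 1, 1, 1, 0, 2, 1, 1, 0, 1, 2]),
   ([3, 3, 1, 2], [0, 1, 1, 2, 2, 1, 3, 1, 1, 0, 2, 3]),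
   ([2, 2, 1, 1], [0, 0, 0, 1, 1, 1, 2, 1, 1, 1, 1, 2]),
   ([3, 3, 1, 2], [0, 1, 0, 2, 2, 1, 3, 1, 1, 1, 2, 3]),
   ([2, 2, 1, 1], [0, 1, 0, 1, 1, 0, 2, 1, 1, 1, 1, 2]),
   ([3, 3, 3, 2], [0, 1, 1, 2, 2, 1, 3, 1, 3, 2, 2, 3]),
   ([3, 3, 2, 2], [0, 1, 0, 2, 2, 1, 3, 1, 2, 2, 2, 3]),
   ([2, 2, 1, 2], [0, 1, 1, 2, 1, 1, 2, 1, 1, 0, 1, 2]),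
   ([1, 3, 1, 2], [0, 1, 1, 2, 2, 1, 1, 1, 1, 0, 2, 1]),
   ([2, 2, 1, 2], [0, 1, 1, 2, 2, 1, 2, 0, 1, 0, 1, 2]),
   ([1, 2, 1, 2], [1, 1, 1, 2, 1, 1, 1, 1, 1, 0, 1, 0]),
   ([1, 2, 2, 2], [1, 1, 1, 2, 1, 1, 1, 1, 2, 1, 1, 0]),
   ([1, 1, 1, 1], [0, 1, 1, 1, 0, 0, 1, 1, 1, 0, 0, 1]),
   ([1, 2, 1, 2], [1, 1, 0, 2, 1, 1, 1, 1, 1, 1, 1, 0]),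
   ([1, 3, 2, 2], [1, 1, 0, 2, 2, 1, 1, 1, 2, 2, 2, 0]),
   ([1, 3, 3, 2], [0, 1, 1, 2, 2, 1, 1, 1, 3, 2, 2, 1]),
   ([1, 2, 1, 1], [0, 0, 0, 1, 1, 1, 1, 1, 1, 1, 1, 1]),
   ([2, 2, 2, 1], [0, 1, 0, 1, 1, 0, 2, 1, 2, 2, 1, 2]),
   ([1, 3, 2, 2], [0, 1, 0, 2, 2, 1, 1, 1, 2, 2, 2, 1]),
   ([1, 2, 2, 1], [0, 1, 0, 1, 1, 0, 1, 1, 2, 2, 1, 1]),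
   ([1, 1, 1, 1], [0, 1, 1, 1, 1, 0, 1, 0, 1, 0, 0, 1]),
   ([1, 3, 1, 2], [0, 1, 0, 2, 2, 1, 1, 1, 1, 1, 2, 1]),
   ([1, 3, 1, 2], [1, 1, 0, 2, 2, 1, 1, 1, 1, 1, 2, 0]),
   ([2, 3, 2, 2], [1, 1, 0, 2, 2, 1, 2, 1, 2, 2, 2, 1]),
   ([2, 3, 1, 2], [1, 1, 0, 2, 2, 1, 2, 1, 1, 1, 2, 1]),
   ([1, 2, 1, 2], [0, 1, 1, 2, 1, 1, 1, 1, 1, 0, 1, 1]),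
   ([1, 2, 2, 2], [0, 1, 1, 2, 1, 1, 1, 1, 2, 1, 1, 1]),
   ([1, 2, 1, 2], [0, 1, 0, 2, 1, 1, 1, 1, 1, 1, 1, 1]),
   ([2, 2, 2, 2], [0, 1, 1, 2, 1, 1, 2, 1, 2, 1, 1, 2]),
   ([2, 2, 1, 2], [0, 1, 0, 2, 1, 1, 2, 1, 1, 1, 1, 2]),
   ([0, 1, 1, 1], [0, 1, 0, 1, 1, 0, 0, 0, 1, 1, 0, 0]),
   ([1, 2, 1, 2], [0, 1, 1, 2, 2, 1, 1, 0, 1, 0, 1, 1]),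
   ([1, 2, 2, 2], [0, 1, 1, 2, 2, 1, 1, 0, 2, 1, 1, 1]),
   ([2, 2, 2, 2], [0, 1, 1, 2, 2, 1, 2, 0, 2, 1, 1, 2]),
   ([1, 2, 1, 2], [0, 1, 0, 2, 2, 1, 1, 0, 1, 1, 1, 1]),
   ([2, 2, 1, 2], [0, 1, 0, 2, 2, 1, 2, 0, 1, 1, 1, 2]),
   ([1, 2, 1, 1], [1, 1, 0, 1, 1, 0, 1, 1, 1, 1, 1, 0]),
   ([1, 2, 1, 1], [0, 1, 0, 1, 1, 0, 1, 1, 1, 1, 1, 1]),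
   ([1, 1, 1, 1], [0, 0, 1, 1, 1, 1, 1, 0, 1, 0, 0, 1]),
   ([1, 1, 1, 1], [0, 1, 0, 1, 0, 0, 1, 1, 1, 1, 0, 1]),
   ([1, 1, 1, 1], [0, 1, 0, 1, 1, 0, 1, 0, 1, 1, 0, 1]),
   ([1, 1, 0, 1], [0, 0, 0, 1, 1, 1, 1, 0, 0, 0, 0, 1]),
   ([1, 1, 0, 1], [0, 0, 0, 1, 1, 0, 1, 0, 0, 0, 1, 1]),
   ([0, 1, 0, 1], [0, 0, 0, 1, 1, 0, 0, 0, 0, 0, 1, 0]),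
   ([0, 1, 1, 1], [0, 0, 0, 1, 1, 0, 0, 0, 1, 1, 1, 0]),
   ([0, 1, 1, 0], [0, 0, 0, 0, 0, 0, 0, 0, 1, 1, 1, 0]),
   ([1, 1, 1, 1], [0, 0, 0, 1, 1, 0, 1, 0, 1, 1, 1, 1]),
   ([1, 1, 1, 0], [0, 0, 0, 0, 0, 0, 1, 0, 1, 1, 1, 1]),
   ([1, 1, 0, 0], [0, 0, 0, 0, 0, 0, 1, 0, 0, 0, 1, 1]),
   ([0, 0, 1, 0], [0, 0, 0, 0, 0, 0, 0, 0, 1, 0, 0, 0]),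
   ([1, 0, 0, 0], [0, 0, 0, 0, 0, 0, 0, 0, 0, 0, 0, 1]),
   ([0, 0, 0, 1], [0, 0, 0, 1, 0, 0, 0, 0, 0, 0, 0, 0]),
   ([0, 1, 0, 0], [0, 0, 0, 0, 0, 0, 0, 0, 0, 0, 1, 0])]

/-- The coefficient vectors of the linear forms in `(k, p)` which the inequalities of
`SatisfiesIneqs` require to be nonnegative. -/
def sigmaRows : List (List ℤ) :=
  sigmaTable.map fun c => c.1 ++ c.2.map Neg.neg

theorem zero_le_rowDot_append_neg_iff {a b r s : List ℤ} (h : a.length = r.length) :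
    0 ≤ rowDot (a ++ b.map Neg.neg) (r ++ s) ↔ rowDot b s ≤ rowDot a r := by
  have hneg : rowDot (b.map Neg.neg) s = -rowDot b s := by
    simp [rowDot, List.zipWith_map_left, List.sum_neg, ← List.map_zipWith]
  have happend : rowDot (a ++ b.map Neg.neg) (r ++ s) = rowDot a r - rowDot b s := by
    rw [sub_eq_add_neg, ← hneg, rowDot, List.zipWith_append h, List.sum_append]
    rfl
  rw [happend, sub_nonneg]

theorem satisfiesIneqs_iff {k : Fin 4 → ℤ} {p : Fin 12 → ℤ} :
    SatisfiesIneqs k p ↔ ∀ c ∈ sigmaTable, rowDot c.2 (List.ofFn p) ≤ rowDot c.1 (List.ofFn k) := by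
  have hk : List.ofFn k = [k 0, k 1, k 2, k 3] := rfl
  have hp : List.ofFn p =
    [p 0, p 1, p 2, p 3, p 4, p 5, p 6, p 7, p 8, p 9, p 10, p 11] := rfl
  simp only [hk, hp, sigmaTable, rowDot, List.forall_mem_cons, List.not_mem_nil, false_imp_iff,
    implies_true, and_true, List.zipWith_cons_cons, List.zipWith_nil_left, List.sum_cons,
    List.sum_nil, zero_mul, one_mul, zero_add, add_zero, ← add_assoc, SatisfiesIneqs]
  exact iff_of_eq (by ac_rfl)

theorem sigmaSet_eq_latticeSlice (k : Fin 4 → ℤ) : SigmaSet k = latticeSlice 12 sigmaRows k := by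
  have hlen : ∀ c ∈ sigmaTable, c.1.length = 4 := by decide
  have hrow : ∀ c ∈ sigmaTable, ∀ p : Fin 12 → ℤ,
      0 ≤ rowDot (c.1 ++ c.2.map Neg.neg) (List.ofFn k ++ List.ofFn p) ↔
        rowDot c.2 (List.ofFn p) ≤ rowDot c.1 (List.ofFn k) := fun c hc p =>
    zero_le_rowDot_append_neg_iff (by rw [hlen c hc, List.length_ofFn])
  ext p
  simp only [SigmaSet, latticeSlice, Set.mem_ofPred_eq, satisfiesIneqs_iff, sigmaRows,
    List.forall_mem_map, Pi.le_def, Pi.zero_apply]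
  exact and_congr_right fun _ => forall₂_congr fun c hc => (hrow c hc p).symm

theorem zero_mem_sigmaSet {k : Fin 4 → ℤ} (hk : 0 ≤ k) : 0 ∈ SigmaSet k := by
  have h0 : 0 ≤ k 0 := hk 0
  have h1 : 0 ≤ k 1 := hk 1
  have h2 : 0 ≤ k 2 := hk 2
  have h3 : 0 ≤ k 3 := hk 3
  refine ⟨fun _ => le_rfl, ?_⟩
  simp only [SatisfiesIneqs, Pi.zero_apply, mul_zero, add_zero]
  and_intros <;> positivity

theorem degree_pos_and_dvd_of_mem_doubleDescription_sigmaRows :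
    ∀ r ∈ doubleDescription 16 sigmaRows, 0 < r.degree 4 ∧ ∀ x ∈ r.row, r.degree 4 ∣ x := by
  decide +kernel

end SigmaSet

/-- Ehrhart-type polynomiality: there is a polynomial of total degree at most 12 counting
the points of Σ(k). -/
theorem sigmaSet_card_polynomial :
    ∃ f : MvPolynomial (Fin 4) ℚ, f.totalDegree ≤ 12 ∧
      ∀ k : Fin 4 → ℤ, (∀ i, 0 ≤ k i) →
        (SigmaSet k).Finite ∧
          ((SigmaSet k).ncard : ℚ) = MvPolynomial.eval (fun i => (k i : ℚ)) f := by
  have hrays := degree_pos_and_dvd_of_mem_doubleDescription_sigmaRows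
  have hne : ∀ i : Fin 4, (latticeSlice 12 sigmaRows (Pi.single i 1)).Nonempty := fun i =>
    ⟨0, sigmaSet_eq_latticeSlice _ ▸ zero_mem_sigmaSet (Pi.single_nonneg.2 zero_le_one)⟩
  have hcount : HasPolynomialCount 12 SigmaSet := by
    rw [funext sigmaSet_eq_latticeSlice]
    exact hasPolynomialCount_latticeSlice (fun r hr => (hrays r hr).1)
      (fun r hr => (hrays r hr).2) hne
  exact hcount
end

section
/- Let k = (k1,k2,k3,k4) ∈ ℤ^4 with k1, k2, k3, k4 ≥ 1, and let p = (p1,…,p12) ∈ ℤ^12 have nonnegative entries with p_j = 0 for all j ∉ {1,3,8,11}, and suppose p11 ≤ k2, p8 ≤ k1+k2+k3, p3+p8 ≤ k1+k2+k3+k4, and p1+p3+p8+p11 ≤ k1+2k2+k3+k4. Then the pair (k,p) can be written as a sum, with nonnegative integer coefficients, of the 52 fundamental generators. (This is the terminal decomposition step in the case k1,k2,k3,k4 > 0 of the proof of Theorem 1 of the paper.) -/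
/-- The 52 fundamental generators in (ℤ^4) × (ℤ^12). -/
def gens : Fin 52 → (Fin 4 → ℤ) × (Fin 12 → ℤ) :=
  ![
    (Pi.single 0 1, 0),
    (Pi.single 0 1, Pi.single 11 1),
    (Pi.single 0 1, Pi.single 7 1),
    (Pi.single 0 1, Pi.single 6 1),
    (Pi.single 0 1, Pi.single 5 1),
    (Pi.single 0 1, Pi.single 2 1),
    (Pi.single 0 1, Pi.single 0 1),
    (Pi.single 0 1, Pi.single 0 1 + Pi.single 11 1),
    (Pi.single 1 1, 0),
    (Pi.single 1 1, Pi.single 10 1),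
    (Pi.single 1 1, Pi.single 9 1),
    (Pi.single 1 1, Pi.single 7 1),
    (Pi.single 1 1, Pi.single 6 1),
    (Pi.single 1 1, Pi.single 5 1),
    (Pi.single 1 1, Pi.single 4 1),
    (Pi.single 1 1, Pi.single 2 1),
    (Pi.single 1 1, Pi.single 1 1),
    (Pi.single 1 1, Pi.single 0 1),
    (Pi.single 1 1, Pi.single 7 1 + Pi.single 10 1),
    (Pi.single 1 1, Pi.single 5 1 + Pi.single 10 1),
    (Pi.single 1 1, Pi.single 2 1 + Pi.single 10 1),
    (Pi.single 1 1, Pi.single 1 1 + Pi.single 10 1),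
    (Pi.single 1 1, Pi.single 0 1 + Pi.single 10 1),
    (Pi.single 1 1, Pi.single 5 1 + Pi.single 9 1),
    (Pi.single 1 1, Pi.single 2 1 + Pi.single 9 1),
    (Pi.single 1 1, Pi.single 0 1 + Pi.single 9 1),
    (Pi.single 1 1, Pi.single 5 1 + Pi.single 7 1),
    (Pi.single 1 1, Pi.single 4 1 + Pi.single 7 1),
    (Pi.single 1 1, Pi.single 0 1 + Pi.single 7 1),
    (Pi.single 1 1, Pi.single 0 1 + Pi.single 6 1),
    (Pi.single 1 1, Pi.single 1 1 + Pi.single 5 1),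
    (Pi.single 1 1, Pi.single 0 1 + Pi.single 5 1),
    (Pi.single 1 1, Pi.single 0 1 + Pi.single 4 1),
    (Pi.single 1 1, Pi.single 0 1 + Pi.single 2 1),
    (Pi.single 1 1, Pi.single 0 1 + Pi.single 1 1),
    (Pi.single 1 1, Pi.single 0 2),
    (Pi.single 2 1, 0),
    (Pi.single 2 1, Pi.single 9 1),
    (Pi.single 2 1, Pi.single 8 1),
    (Pi.single 2 1, Pi.single 7 1),
    (Pi.single 2 1, Pi.single 2 1),
    (Pi.single 2 1, Pi.single 1 1),
    (Pi.single 2 1, Pi.single 0 1),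
    (Pi.single 2 1, Pi.single 2 1 + Pi.single 9 1),
    (Pi.single 3 1, 0),
    (Pi.single 3 1, Pi.single 5 1),
    (Pi.single 3 1, Pi.single 4 1),
    (Pi.single 3 1, Pi.single 3 1),
    (Pi.single 3 1, Pi.single 2 1),
    (Pi.single 3 1, Pi.single 1 1),
    (Pi.single 3 1, Pi.single 0 1),
    (Pi.single 3 1, Pi.single 1 1 + Pi.single 5 1)]

/-!
Choosing a generator over `ε₁` or `ε₃` provides a slot that may be left empty or hold one of `e₁`,
`e₃`, `e₈`; a generator over `ε₄` provides a slot that may be left empty or hold `e₁` or `e₃`. The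
key observation is that a generator over `ε₂` provides two independent slots, one of the former
kind and an extra one that may be left empty or hold `e₁` or `e₁₁`: the sum of any two admissible
contents is again the second component of a generator. So it suffices to place `p₁`, `p₃`, `p₈`,
`p₁₁` copies of `e₁`, `e₃`, `e₈`, `e₁₁` into `k₁ + k₂ + k₃` slots of the first kind, `k₄` of the
second and `k₂` of the third. The slots admitting `e₈` also admit `e₃`, and all slots admit `e₁`,
so filling greedily in the order `e₁₁`, `e₈`, `e₃`, `e₁` succeeds exactly under the four
inequalities.
-/

theorem sum_single_of_forall_notMem_eq_zero {ι M : Type*} [DecidableEq ι] [AddCommMonoid M]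
    {s : Finset ι} {f : ι → M} (hf : ∀ j ∉ s, f j = 0) : ∑ j ∈ s, Pi.single j (f j) = f := by
  ext i
  rw [Finset.sum_apply, Finset.sum_pi_single, ite_eq_left_iff]
  exact fun hi => (hf i hi).symm

section MinkowskiSums

-- For a set `T`, `n • T` is the `n`-fold sum `T + ⋯ + T`, not the dilate `{n • x | x ∈ T}`.
open scoped Pointwise

theorem sum_nsmul_mem_nsmul {ι M : Type*} [AddCommMonoid M] {T : Set M} (hT : 0 ∈ T)
    (s : Finset ι) {a : ι → ℕ} {x : ι → M} (hx : ∀ i ∈ s, x i ∈ T) {n : ℕ}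
    (hn : ∑ i ∈ s, a i ≤ n) : ∑ i ∈ s, a i • x i ∈ n • T := by
  refine Set.nsmul_subset_nsmul_right hT hn ?_
  rw [← Finset.sum_nsmul_assoc]
  exact Set.finsetSum_mem_finsetSum s _ _ fun i hi => Set.nsmul_mem_nsmul (hx i hi)

theorem nsmul_mk_mem_of_mem_nsmul {M N : Type*} [AddMonoid M] [AddMonoid N]
    {S : AddSubmonoid (M × N)} {T : Set N} {u : M} (hT : ∀ y ∈ T, (u, y) ∈ S) {n : ℕ} {y : N}
    (hy : y ∈ n • T) : (n • u, y) ∈ S := by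
  induction n generalizing y with
  | zero =>
    obtain rfl : y = 0 := by simpa only [zero_nsmul, Set.mem_zero] using hy
    simpa only [zero_nsmul, Prod.mk_zero_zero] using S.zero_mem
  | succ n ih =>
    rw [succ_nsmul] at hy
    obtain ⟨y₁, hy₁, y₂, hy₂, rfl⟩ := Set.mem_add.mp hy
    simpa only [succ_nsmul, Prod.mk_add_mk] using S.add_mem (ih hy₁) (hT y₂ hy₂)

theorem mk_mem_closure_of_mem_sum_nsmul {ι R M : Type*} [Fintype ι] [DecidableEq ι]
    [AddCommMonoidWithOne R] [AddCommMonoid M] {G : Set ((ι → R) × M)} {k : ι → ℕ} {y : M}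
    (hy : y ∈ ∑ i, k i • {g | (Pi.single i 1, g) ∈ G}) :
    (fun i => (k i : R), y) ∈ AddSubmonoid.closure G := by
  obtain ⟨y', hy', rfl⟩ := (Set.mem_fintype_sum _ _).mp hy
  have block (i : ι) : (Pi.single i (k i : R), y' i) ∈ AddSubmonoid.closure G := by
    rw [← nsmul_one, Pi.single_smul]
    exact nsmul_mk_mem_of_mem_nsmul (fun g hg => AddSubmonoid.subset_closure hg) (hy' i)
  have sum_blocks : (fun i => (k i : R), ∑ i, y' i) = ∑ i, (Pi.single i (k i : R), y' i) :=
    Prod.ext (by rw [Prod.fst_sum, Finset.univ_sum_single]) (by rw [Prod.snd_sum])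
  rw [sum_blocks]
  exact sum_mem fun i _ => block i

/-- The vectors `g` such that `(εᵢ, g)` is a fundamental generator. -/
def genFiber (i : Fin 4) : Set (Fin 12 → ℤ) := {g | (Pi.single i 1, g) ∈ Set.range gens}

/-- The admissible contents of the slot that `ε₁`, `ε₂` and `ε₃` each provide: nothing, or one of
`e₁`, `e₃`, `e₈` (the indices in the code are shifted by one). -/
def mainSlot : Set (Fin 12 → ℤ) := {0, Pi.single 0 1, Pi.single 2 1, Pi.single 7 1}

/-- The admissible contents of the second slot that `ε₂` provides: nothing, `e₁` or `e₁₁`. -/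
def extraSlot : Set (Fin 12 → ℤ) := {0, Pi.single 0 1, Pi.single 10 1}

/-- The admissible contents of the slot that `ε₄` provides: nothing, `e₁` or `e₃`. -/
def smallSlot : Set (Fin 12 → ℤ) := {0, Pi.single 0 1, Pi.single 2 1}

theorem mainSlot_subset_genFiber_zero : mainSlot ⊆ genFiber 0 := by
  rintro _ (rfl | rfl | rfl | rfl)
  exacts [⟨0, rfl⟩, ⟨6, rfl⟩, ⟨5, rfl⟩, ⟨2, rfl⟩]

theorem mainSlot_add_extraSlot_subset_genFiber_one : mainSlot + extraSlot ⊆ genFiber 1 := by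
  have single_add_single : (Pi.single 0 1 + Pi.single 0 1 : Fin 12 → ℤ) = Pi.single 0 2 := by
    rw [← Pi.single_add, one_add_one_eq_two]
  rintro _ ⟨_, rfl | rfl | rfl | rfl, _, rfl | rfl | rfl, rfl⟩ <;>
    simp only [zero_add, add_zero, single_add_single]
  exacts [⟨8, rfl⟩, ⟨17, rfl⟩, ⟨9, rfl⟩, ⟨17, rfl⟩, ⟨35, rfl⟩, ⟨22, rfl⟩,
    ⟨15, rfl⟩, add_comm (Pi.single 0 1) (Pi.single 2 1 : Fin 12 → ℤ) ▸ ⟨33, rfl⟩, ⟨20, rfl⟩,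
    ⟨11, rfl⟩, add_comm (Pi.single 0 1) (Pi.single 7 1 : Fin 12 → ℤ) ▸ ⟨28, rfl⟩, ⟨18, rfl⟩]

theorem mainSlot_subset_genFiber_two : mainSlot ⊆ genFiber 2 := by
  rintro _ (rfl | rfl | rfl | rfl)
  exacts [⟨36, rfl⟩, ⟨42, rfl⟩, ⟨40, rfl⟩, ⟨39, rfl⟩]

theorem smallSlot_subset_genFiber_three : smallSlot ⊆ genFiber 3 := by
  rintro _ (rfl | rfl | rfl)
  exacts [⟨44, rfl⟩, ⟨50, rfl⟩, ⟨48, rfl⟩]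

theorem nsmul_slots_subset_sum_nsmul_genFiber (k : Fin 4 → ℕ) :
    (k 0 + k 1 + k 2) • mainSlot + k 3 • smallSlot + k 1 • extraSlot ⊆
      ∑ i, k i • genFiber i := by
  calc (k 0 + k 1 + k 2) • mainSlot + k 3 • smallSlot + k 1 • extraSlot
      = k 0 • mainSlot + k 1 • (mainSlot + extraSlot) + k 2 • mainSlot + k 3 • smallSlot := by
        simp only [add_nsmul, nsmul_add]
        abel
    _ ⊆ k 0 • genFiber 0 + k 1 • genFiber 1 + k 2 • genFiber 2 + k 3 • genFiber 3 := by
        gcongr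
        exacts [mainSlot_subset_genFiber_zero, mainSlot_add_extraSlot_subset_genFiber_one,
          mainSlot_subset_genFiber_two, smallSlot_subset_genFiber_three]
    _ = ∑ i, k i • genFiber i := by rw [Fin.sum_univ_four]

theorem exists_greedy_filling {a b c d m s x : ℕ} (hd : d ≤ x) (hc : c ≤ m) (hbc : b + c ≤ m + s)
    (h : a + b + c + d ≤ m + s + x) :
    ∃ a₁ a₂ a₃ b₁ b₂, a = a₁ + a₂ + a₃ ∧ b = b₁ + b₂ ∧
      a₁ + b₁ + c ≤ m ∧ a₂ + b₂ ≤ s ∧ a₃ + d ≤ x := by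
  obtain ⟨b₁, b₂, hb, hb₁, hb₂⟩ : ∃ b₁ b₂, b = b₁ + b₂ ∧ b₁ + c ≤ m ∧ b₂ ≤ s :=
    ⟨min b (m - c), b - (m - c), by omega⟩
  obtain ⟨a₁, r, ha, ha₁, hr⟩ :
      ∃ a₁ r, a = a₁ + r ∧ a₁ + b₁ + c ≤ m ∧ r ≤ (s - b₂) + (x - d) :=
    ⟨min a (m - b₁ - c), a - (m - b₁ - c), by omega⟩
  exact ⟨a₁, min r (s - b₂), r - (s - b₂), b₁, b₂, by omega⟩

theorem sum_nsmul_single_mem_nsmul_slots {a b c d m s x : ℕ} (hd : d ≤ x) (hc : c ≤ m)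
    (hbc : b + c ≤ m + s) (h : a + b + c + d ≤ m + s + x) :
    a • Pi.single 0 1 + b • Pi.single 2 1 + c • Pi.single 7 1 + d • Pi.single 10 1 ∈
      m • mainSlot + s • smallSlot + x • extraSlot := by
  obtain ⟨a₁, a₂, a₃, b₁, b₂, rfl, rfl, hm, hs, hx⟩ := exists_greedy_filling hd hc hbc h
  have main_mem : a₁ • Pi.single 0 1 + b₁ • Pi.single 2 1 + c • Pi.single 7 1 ∈ m • mainSlot := by
    simpa [Fin.sum_univ_three] using sum_nsmul_mem_nsmul (T := mainSlot) (by simp [mainSlot])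
      Finset.univ (a := ![a₁, b₁, c]) (x := ![Pi.single 0 1, Pi.single 2 1, Pi.single 7 1])
      (by simp [Fin.forall_fin_succ, mainSlot]) (by simpa [Fin.sum_univ_three] using hm)
  have small_mem : a₂ • Pi.single 0 1 + b₂ • Pi.single 2 1 ∈ s • smallSlot := by
    simpa using sum_nsmul_mem_nsmul (T := smallSlot) (by simp [smallSlot])
      Finset.univ (a := ![a₂, b₂]) (x := ![Pi.single 0 1, Pi.single 2 1])
      (by simp [smallSlot]) (by simpa using hs)
  have extra_mem : a₃ • Pi.single 0 1 + d • Pi.single 10 1 ∈ x • extraSlot := by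
    simpa using sum_nsmul_mem_nsmul (T := extraSlot) (by simp [extraSlot])
      Finset.univ (a := ![a₃, d]) (x := ![Pi.single 0 1, Pi.single 10 1])
      (by simp [extraSlot]) (by simpa using hx)
  convert Set.add_mem_add (Set.add_mem_add main_mem small_mem) extra_mem using 1
  simp only [add_nsmul]
  abel

theorem terminal_decomposition_general (k : Fin 4 → ℤ) (hk : ∀ i, 0 ≤ k i)
    (p : Fin 12 → ℤ) (hp : ∀ j, 0 ≤ p j)
    (hzero : ∀ j : Fin 12, j ∉ ({0, 2, 7, 10} : Set (Fin 12)) → p j = 0)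
    (h1 : p 10 ≤ k 1)
    (h2 : p 7 ≤ k 0 + k 1 + k 2)
    (h3 : p 2 + p 7 ≤ k 0 + k 1 + k 2 + k 3)
    (h4 : p 0 + p 2 + p 7 + p 10 ≤ k 0 + 2 * k 1 + k 2 + k 3) :
    ∃ c : Fin 52 → ℕ, (k, p) = ∑ t, (c t : ℤ) • gens t := by
  lift k to Fin 4 → ℕ using hk
  lift p to Fin 12 → ℕ using hp
  have p_eq : (fun j => (p j : ℤ)) = p 0 • Pi.single 0 1 + p 2 • Pi.single 2 1 +
      p 7 • Pi.single 7 1 + p 10 • Pi.single 10 1 := by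
    rw [← sum_single_of_forall_notMem_eq_zero (s := ({0, 2, 7, 10} : Finset (Fin 12)))
      (f := fun j => (p j : ℤ)) (by simpa using hzero)]
    simp [← Pi.single_smul, add_assoc]
  have p_mem : (fun j => (p j : ℤ)) ∈ ∑ i, k i • genFiber i := by
    rw [p_eq]
    exact nsmul_slots_subset_sum_nsmul_genFiber k <| sum_nsmul_single_mem_nsmul_slots
      (by lia) (by lia) (by lia) (by lia)
  obtain ⟨c, hc⟩ := AddSubmonoid.exists_of_mem_closure_range gens _
    (mk_mem_closure_of_mem_sum_nsmul p_mem)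
  exact ⟨c, by simpa only [natCast_zsmul] using hc⟩

end MinkowskiSums

/-- The terminal decomposition step in the case k1,k2,k3,k4 > 0 of the proof of Theorem 1:
if only p1, p3, p8, p11 can be nonzero and the four essential inequalities hold, then (k,p)
is a sum with nonnegative integer coefficients of the 52 fundamental generators. -/
theorem terminal_decomposition (k : Fin 4 → ℤ) (hk : ∀ i, 1 ≤ k i)
    (p : Fin 12 → ℤ) (hp : ∀ j, 0 ≤ p j)
    (hzero : ∀ j : Fin 12, j ∉ ({0, 2, 7, 10} : Set (Fin 12)) → p j = 0)
    (h1 : p 10 ≤ k 1)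
    (h2 : p 7 ≤ k 0 + k 1 + k 2)
    (h3 : p 2 + p 7 ≤ k 0 + k 1 + k 2 + k 3)
    (h4 : p 0 + p 2 + p 7 + p 10 ≤ k 0 + 2 * k 1 + k 2 + k 3) :
    ∃ c : Fin 52 → ℕ, (k, p) = ∑ t, (c t : ℤ) • gens t :=
  terminal_decomposition_general k (fun i => zero_le_one.trans (hk i)) p hp hzero h1 h2 h3 h4
end

section
/- Let V and W be finite-dimensional irreducible 𝔤-modules with highest weight vectors v ∈ V and w ∈ W. If p ∈ ℕ^N is essential for (V, v) and p' ∈ ℕ^N is essential for (W, w), then p + p' is essential for (V ⊗ W, v ⊗ w). (This is Proposition 1 of the paper: the essential signatures form a semigroup.) -/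
open Pointwise TensorProduct

section Defs

variable {𝔤 : Type*} [LieRing 𝔤] [LieAlgebra ℂ 𝔤]

/-- The simultaneous eigenspace (root space) of a linear functional χ on a Cartan
subalgebra H, as a subset of 𝔤. -/
def rootSet (H : LieSubalgebra ℂ 𝔤) (χ : Module.Dual ℂ H) : Set 𝔤 :=
  {x | ∀ h : H, ⁅(h : 𝔤), x⁆ = χ h • x}

/-- The set of roots: nonzero weights of the adjoint action of H on 𝔤. -/
def roots (H : LieSubalgebra ℂ 𝔤) : Set (Module.Dual ℂ H) :=
  {χ | χ ≠ 0 ∧ ∃ x ∈ rootSet H χ, x ≠ 0}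

/-- m(p) = f₁^{p₁} ⋯ f_N^{p_N} · m (f_N acting first, f₁ last). -/
def sigVec {N : ℕ} (f : Fin N → 𝔤) {M : Type*} [AddCommGroup M] [LieRingModule 𝔤 M]
    (p : Fin N → ℕ) (m : M) : M :=
  (List.finRange N).foldr (fun i acc => (fun y => ⁅f i, y⁆)^[p i] acc) m

/-- The partial sums q_i = p_1 + ⋯ + p_{N−i+1} (0-indexed version). -/
def qsum {N : ℕ} (p : Fin N → ℕ) (i : Fin N) : ℕ :=
  ∑ j : Fin N, if (j : ℕ) < N - (i : ℕ) then p j else 0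

/-- The order on ℕ^N: p < p' iff (q_1, …, q_N) is lexicographically smaller than
(q_1', …, q_N'). -/
def sigLT {N : ℕ} (p p' : Fin N → ℕ) : Prop :=
  ∃ t : Fin N, (∀ s, s < t → qsum p s = qsum p' s) ∧ qsum p t < qsum p' t

/-- p ∈ ℕ^N is essential for (M, m) if m(p) does not lie in the linear span of the
m(p') for p' < p. -/
def IsEssential {N : ℕ} (f : Fin N → 𝔤) {M : Type*} [AddCommGroup M] [Module ℂ M]
    [LieRingModule 𝔤 M] (p : Fin N → ℕ) (m : M) : Prop :=
  sigVec f p m ∉ Submodule.span ℂ {x | ∃ p', sigLT p' p ∧ x = sigVec f p' m}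

/-- A highest weight vector: a nonzero simultaneous eigenvector for H annihilated by the
root space of every positive root. -/
def IsHighestWeightVector (H : LieSubalgebra ℂ 𝔤) (Φplus : Set (Module.Dual ℂ H))
    {M : Type*} [AddCommGroup M] [Module ℂ M] [LieRingModule 𝔤 M] (m : M) : Prop :=
  m ≠ 0 ∧ (∀ h : H, ∃ c : ℂ, ⁅(h : 𝔤), m⁆ = c • m) ∧
    ∀ α ∈ Φplus, ∀ x ∈ rootSet H α, ⁅x, m⁆ = 0

end Defs

/-!
The signature order is the pullback of the lexicographic order along the injective additive map
`p ↦ q`, hence is compatible with addition. Expanding by the Leibniz rule, `(v ⊗ w)(q)` is a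
combination of the tensors `v(a) ⊗ w(b)` with `a + b = q`. Essentiality of `p` and `p'` is witnessed
by functionals `ξ` and `η` killing everything strictly below `p` and `p'`; then `ξ ⊗ η` kills
`(v ⊗ w)(q)` for `q < p + p'`, and in `(v ⊗ w)(p + p')` only the term `v(p) ⊗ w(p')` survives, whose
coefficient is a product of binomials, nonzero in characteristic zero.
-/

section SignatureOrder

variable {N : ℕ} {a b p p' : Fin N → ℕ}

lemma qsum_rev (p : Fin N → ℕ) (i : Fin N) : qsum p i.rev = ∑ j ∈ Finset.Iic i, p j := by
  have mem_iff (j : Fin N) : (j : ℕ) < N - i.rev ↔ j ∈ Finset.Iic i := by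
    rw [Finset.mem_Iic, Fin.le_def, Fin.val_rev]
    omega
  simp only [qsum, mem_iff, Finset.sum_ite_mem, Finset.univ_inter]

lemma qsum_injective : Function.Injective (qsum : (Fin N → ℕ) → Fin N → ℕ) := by
  intro p p' h
  funext i
  induction i using WellFoundedLT.induction with
  | ind i ih =>
    have sum_Iic_eq : ∑ j ∈ Finset.Iic i, p j = ∑ j ∈ Finset.Iic i, p' j := by
      rw [← qsum_rev, ← qsum_rev, h]
    have sum_Iio_eq : ∑ j ∈ Finset.Iio i, p j = ∑ j ∈ Finset.Iio i, p' j :=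
      Finset.sum_congr rfl fun j hj => ih j (Finset.mem_Iio.mp hj)
    rwa [← Finset.sum_Iio_add_eq_sum_Iic, ← Finset.sum_Iio_add_eq_sum_Iic, sum_Iio_eq,
      Nat.add_left_cancel_iff] at sum_Iic_eq

lemma qsum_add (p p' : Fin N → ℕ) : qsum (p + p') = qsum p + qsum p' := by
  funext i
  simp only [qsum, Pi.add_apply, ← Finset.sum_add_distrib, ← ite_add_zero]

lemma sigLT_iff_toLex_qsum_lt : sigLT p p' ↔ toLex (qsum p) < toLex (qsum p') := Iff.rfl

lemma sigLT_or_sigLT_of_sigLT_add (h : sigLT (a + b) (p + p')) : sigLT a p ∨ sigLT b p' := by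
  simp only [sigLT_iff_toLex_qsum_lt, qsum_add, toLex_add] at h ⊢
  exact lt_or_lt_of_add_lt_add h

lemma sigLT_or_sigLT_of_add_eq_add (h : a + b = p + p') (hne : ¬(a = p ∧ b = p')) :
    sigLT a p ∨ sigLT b p' := by
  by_contra! hnot
  simp only [sigLT_iff_toLex_qsum_lt] at hnot
  obtain ⟨le_a, le_b⟩ := hnot.imp not_lt.mp not_lt.mp
  have add_eq : toLex (qsum p) + toLex (qsum p') = toLex (qsum a) + toLex (qsum b) := by
    rw [← toLex_add, ← toLex_add, ← qsum_add, ← qsum_add, h]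
  obtain ⟨hp, hp'⟩ := (add_eq_add_iff_eq_and_eq le_a le_b).mp add_eq
  exact hne ⟨qsum_injective (toLex.injective hp.symm), qsum_injective (toLex.injective hp'.symm)⟩

end SignatureOrder

lemma sum_piFinset_succ {n : ℕ} {α : Fin (n + 1) → Type*} {M : Type*} [AddCommMonoid M]
    (S : ∀ i, Finset (α i)) (g : (∀ i, α i) → M) :
    ∑ k ∈ Fintype.piFinset S, g k =
      ∑ x ∈ S 0, ∑ k ∈ Fintype.piFinset (Fin.tail S), g (Fin.cons x k) := by
  have piFinset_eq := Finset.filter_piFinset_eq_map_consEquiv S fun _ => True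
  simp only [Finset.filter_true] at piFinset_eq
  rw [piFinset_eq, Finset.sum_map, Finset.sum_product]
  rfl

lemma fst_add_snd_of_mem_piFinset_antidiagonal {ι A : Type*} [Fintype ι] [DecidableEq ι]
    [AddMonoid A] [Finset.HasAntidiagonal A] {q : ι → A} {k : ι → A × A}
    (hk : k ∈ Fintype.piFinset fun i => Finset.HasAntidiagonal.antidiagonal (q i)) :
    (fun i => (k i).1) + (fun i => (k i).2) = q :=
  funext fun i => Finset.HasAntidiagonal.mem_antidiagonal.mp (Fintype.mem_piFinset.mp hk i)

section Leibniz

open Finset LieModule TensorProduct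

variable {R L V W : Type*} [CommRing R] [LieRing L]
  [AddCommGroup V] [Module R V] [LieRingModule L V]
  [AddCommGroup W] [Module R W] [LieRingModule L W]
  {N : ℕ} {f : Fin N → L} {p p' q : Fin N → ℕ} {v : V} {w : W}
  {ξ : Module.Dual R V} {η : Module.Dual R W}

lemma dual_mul_dual_sigVec_eq_zero (hξ : ∀ a, sigLT a p → ξ (sigVec f a v) = 0)
    (hη : ∀ b, sigLT b p' → η (sigVec f b w) = 0) {a b : Fin N → ℕ}
    (h : sigLT a p ∨ sigLT b p') : ξ (sigVec f a v) * η (sigVec f b w) = 0 :=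
  h.elim (fun ha => mul_eq_zero_of_left (hξ a ha) _) fun hb => mul_eq_zero_of_right _ (hη b hb)

variable [LieAlgebra R L] [LieModule R L V] [LieModule R L W]

lemma toEnd_pow_tmul (x : L) (n : ℕ) (v : V) (w : W) :
    (toEnd R L (V ⊗[R] W) x ^ n) (v ⊗ₜ w) =
      ∑ k ∈ antidiagonal n,
        n.choose k.1 • ((toEnd R L V x ^ k.1) v ⊗ₜ[R] (toEnd R L W x ^ k.2) w) := by
  have toEnd_eq : toEnd R L (V ⊗[R] W) x =
      (toEnd R L V x).rTensor W + (toEnd R L W x).lTensor V := rfl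
  have commute : Commute ((toEnd R L V x).rTensor W) ((toEnd R L W x).lTensor V) :=
    TensorProduct.ext' fun _ _ => rfl
  rw [toEnd_eq, commute.add_pow', LinearMap.sum_apply]
  simp only [LinearMap.smul_apply, Module.End.mul_apply, LinearMap.lTensor_pow,
    LinearMap.rTensor_pow, LinearMap.lTensor_tmul, LinearMap.rTensor_tmul]

variable (R) in
lemma sigVec_succ (f : Fin (N + 1) → L) (p : Fin (N + 1) → ℕ) (v : V) :
    sigVec f p v = (toEnd R L V (f 0) ^ p 0) (sigVec (Fin.tail f) (Fin.tail p) v) := by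
  rw [sigVec, List.finRange_succ, List.foldr_cons, List.foldr_map, Module.End.pow_apply]
  rfl

lemma sigVec_tmul (f : Fin N → L) (q : Fin N → ℕ) (v : V) (w : W) :
    sigVec f q (v ⊗ₜ[R] w) =
      ∑ k ∈ Fintype.piFinset fun i => antidiagonal (q i),
        (∏ i, (q i).choose (k i).1) •
          (sigVec f (fun i => (k i).1) v ⊗ₜ[R] sigVec f (fun i => (k i).2) w) := by
  induction N with
  | zero => simp [sigVec]
  | succ N ih =>
    rw [sigVec_succ R, ih, map_sum, sum_piFinset_succ, sum_comm]
    refine sum_congr rfl fun k _ => ?_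
    rw [map_nsmul, toEnd_pow_tmul, smul_sum]
    refine sum_congr rfl fun k₀ _ => ?_
    rw [sigVec_succ R f _ v, sigVec_succ R f _ w, Fin.prod_univ_succ, smul_smul, mul_comm]
    rfl

lemma dualDistrib_sigVec_tmul (ξ : Module.Dual R V) (η : Module.Dual R W) (f : Fin N → L)
    (q : Fin N → ℕ) (v : V) (w : W) :
    dualDistrib R V W (ξ ⊗ₜ η) (sigVec f q (v ⊗ₜ[R] w)) =
      ∑ k ∈ Fintype.piFinset fun i => antidiagonal (q i),
        (∏ i, (q i).choose (k i).1) •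
          (ξ (sigVec f (fun i => (k i).1) v) * η (sigVec f (fun i => (k i).2) w)) := by
  simp only [sigVec_tmul, map_sum, map_nsmul, dualDistrib_apply]

lemma dualDistrib_sigVec_tmul_eq_zero (hξ : ∀ a, sigLT a p → ξ (sigVec f a v) = 0)
    (hη : ∀ b, sigLT b p' → η (sigVec f b w) = 0) (hq : sigLT q (p + p')) :
    dualDistrib R V W (ξ ⊗ₜ η) (sigVec f q (v ⊗ₜ[R] w)) = 0 := by
  rw [dualDistrib_sigVec_tmul]
  refine sum_eq_zero fun k hk => ?_
  rw [← fst_add_snd_of_mem_piFinset_antidiagonal hk] at hq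
  rw [dual_mul_dual_sigVec_eq_zero hξ hη (sigLT_or_sigLT_of_sigLT_add hq), smul_zero]

lemma dualDistrib_sigVec_add_tmul (hξ : ∀ a, sigLT a p → ξ (sigVec f a v) = 0)
    (hη : ∀ b, sigLT b p' → η (sigVec f b w) = 0) :
    dualDistrib R V W (ξ ⊗ₜ η) (sigVec f (p + p') (v ⊗ₜ[R] w)) =
      (∏ i, (p i + p' i).choose (p i)) • (ξ (sigVec f p v) * η (sigVec f p' w)) := by
  have mem_splitting :
      (fun i => (p i, p' i)) ∈ Fintype.piFinset fun i => antidiagonal ((p + p') i) :=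
    Fintype.mem_piFinset.mpr fun _ => mem_antidiagonal.mpr rfl
  rw [dualDistrib_sigVec_tmul, sum_eq_single_of_mem _ mem_splitting]
  · rfl
  · intro k hk hne
    have components_ne : ¬((fun i => (k i).1) = p ∧ (fun i => (k i).2) = p') := fun h =>
      hne (funext fun i => Prod.ext (congrFun h.1 i) (congrFun h.2 i))
    have lower := sigLT_or_sigLT_of_add_eq_add
      (fst_add_snd_of_mem_piFinset_antidiagonal hk) components_ne
    rw [dual_mul_dual_sigVec_eq_zero hξ hη lower, smul_zero]

end Leibniz

section Essential

variable {L V W : Type*} [LieRing L]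
  [AddCommGroup V] [Module ℂ V] [LieRingModule L V]
  [AddCommGroup W] [Module ℂ W] [LieRingModule L W]
  {N : ℕ} {f : Fin N → L} {p p' : Fin N → ℕ} {v : V} {w : W}

lemma isEssential_iff_exists_dual :
    IsEssential f p v ↔
      ∃ ξ : Module.Dual ℂ V, ξ (sigVec f p v) ≠ 0 ∧ ∀ a, sigLT a p → ξ (sigVec f a v) = 0 := by
  refine ⟨fun hp => ?_, fun ⟨ξ, hξ, hξ_lower⟩ hmem => hξ ?_⟩
  · obtain ⟨ξ, hξ, hξ_span⟩ := Submodule.exists_le_ker_of_notMem hp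
    exact ⟨ξ, hξ, fun a ha => hξ_span (Submodule.subset_span ⟨a, ha, rfl⟩)⟩
  · have span_le_ker :
        Submodule.span ℂ {x | ∃ a, sigLT a p ∧ x = sigVec f a v} ≤ LinearMap.ker ξ := by
      rw [Submodule.span_le]
      rintro _ ⟨a, ha, rfl⟩
      exact hξ_lower a ha
    exact span_le_ker hmem

theorem isEssential_add_general [LieAlgebra ℂ L] [LieModule ℂ L V] [LieModule ℂ L W]
    (hp : IsEssential f p v) (hp' : IsEssential f p' w) :
    IsEssential f (p + p') (v ⊗ₜ[ℂ] w) := by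
  rw [isEssential_iff_exists_dual] at hp hp' ⊢
  obtain ⟨ξ, hξ, hξ_lower⟩ := hp
  obtain ⟨η, hη, hη_lower⟩ := hp'
  refine ⟨TensorProduct.dualDistrib ℂ V W (ξ ⊗ₜ η), ?_, fun q hq =>
    dualDistrib_sigVec_tmul_eq_zero hξ_lower hη_lower hq⟩
  have choose_ne_zero : ∏ i, (p i + p' i).choose (p i) ≠ 0 :=
    Finset.prod_ne_zero_iff.mpr fun i _ => (Nat.choose_pos (Nat.le_add_right _ _)).ne'
  rw [dualDistrib_sigVec_add_tmul hξ_lower hη_lower]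
  exact smul_ne_zero choose_ne_zero (mul_ne_zero hξ hη)

end Essential

/-- Proposition 1 of the paper: the essential signatures form a semigroup. If p is essential
for (V, v) and p' is essential for (W, w), then p + p' is essential for (V ⊗ W, v ⊗ w). -/
theorem isEssential_add {𝔤 : Type*} [LieRing 𝔤] [LieAlgebra ℂ 𝔤]
    [FiniteDimensional ℂ 𝔤] [LieAlgebra.IsKilling ℂ 𝔤]
    (H : LieSubalgebra ℂ 𝔤) [H.IsCartanSubalgebra]
    (Φplus : Set (Module.Dual ℂ H))
    (hunion : roots H = Φplus ∪ -Φplus)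
    (hdisj : Disjoint Φplus (-Φplus))
    (hclosed : ∀ α ∈ Φplus, ∀ β ∈ Φplus, α + β ∈ roots H → α + β ∈ Φplus)
    {N : ℕ} (α : Fin N → Module.Dual ℂ H)
    (hinj : Function.Injective α) (hrange : Set.range α = Φplus)
    (f : Fin N → 𝔤) (hf0 : ∀ i, f i ≠ 0) (hf : ∀ i, f i ∈ rootSet H (-α i))
    (V W : Type*)
    [AddCommGroup V] [Module ℂ V] [LieRingModule 𝔤 V] [LieModule ℂ 𝔤 V]
    [FiniteDimensional ℂ V] [LieModule.IsIrreducible ℂ 𝔤 V]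
    [AddCommGroup W] [Module ℂ W] [LieRingModule 𝔤 W] [LieModule ℂ 𝔤 W]
    [FiniteDimensional ℂ W] [LieModule.IsIrreducible ℂ 𝔤 W]
    (v : V) (w : W)
    (hv : IsHighestWeightVector H Φplus v) (hw : IsHighestWeightVector H Φplus w)
    (p p' : Fin N → ℕ)
    (hp : IsEssential f p v) (hp' : IsEssential f p' w) :
    IsEssential f (p + p') (v ⊗ₜ[ℂ] w) :=
  isEssential_add_general hp hp'
end
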